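/- arXiv:1606.03758 — 3 statements merged into one kernel-verified Lean document; each statement's English description precedes it below -/
import Mathlib

section
/- For every linear tree-to-word transducer M there exists a linear tree-to-word transducer M' such that M' is equivalent to M, M' is earliest, and M and M' are same-ordered. -/
namespace LTWpaper

/-- Trees over a ranked alphabet: a symbol of arity `n` with `n` children. -/
inductive RTree (F : Type) (ar : F → ℕ) : Type
  | node (f : F) (ts : Fin (ar f) → RTree F ar) : RTree F ar

/-- A rule right-hand side `u₀ q₁(x_{σ(1)}) u₁ … q_n(x_{σ(n)}) u_n`:
`word i` is `u_i` (for `i : Fin (n+1)`), `st i` is `q_{i+1}` (for `i : Fin n`),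
and position `i` reads the subtree `x_{perm i}`. -/
structure LTWRule (Δ Q : Type) (n : ℕ) where
  word : Fin (n + 1) → List Δ
  st : Fin n → Q
  perm : Equiv.Perm (Fin n)

/-- A (deterministic) linear tree-to-word transducer with axiom `pre init(x) post`. -/
structure LTW (F : Type) (ar : F → ℕ) (Δ Q : Type) where
  pre : List Δ
  init : Q
  post : List Δ
  rules : Q → (f : F) → Option (LTWRule Δ Q (ar f))

/-- `u 0 ++ ws 0 ++ u 1 ++ ws 1 ++ ⋯ ++ ws (n-1) ++ u n`. -/
def interleave {Δ : Type} (n : ℕ) (u : Fin (n + 1) → List Δ) (ws : Fin n → List Δ) :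
    List Δ :=
  u 0 ++ (List.finRange n).foldr (fun i acc => ws i ++ u i.succ ++ acc) []

/-- The partial function `⟦M⟧_q` computed by state `q`. -/
def LTW.semState {F Δ Q : Type} {ar : F → ℕ} (M : LTW F ar Δ Q) :
    RTree F ar → Q → Option (List Δ)
  | .node f ts, q =>
    match M.rules q f with
    | none => none
    | some r =>
      if h : ∀ i : Fin (ar f), (M.semState (ts (r.perm i)) (r.st i)).isSome then
        some (interleave (ar f) r.word fun i => (M.semState (ts (r.perm i)) (r.st i)).get (h i))
      else none

/-- The partial function `⟦M⟧` computed by the transducer. -/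
def LTW.sem {F Δ Q : Type} {ar : F → ℕ} (M : LTW F ar Δ Q) (t : RTree F ar) :
    Option (List Δ) :=
  (M.semState t M.init).map fun w => M.pre ++ w ++ M.post

/-- The output language `L_q` of a state. -/
def LTW.lang {F Δ Q : Type} {ar : F → ℕ} (M : LTW F ar Δ Q) (q : Q) : Set (List Δ) :=
  {w | ∃ t, M.semState t q = some w}

/-- Standing assumption: every state has nonempty domain. -/
def LTW.NonemptyDoms {F Δ Q : Type} {ar : F → ℕ} (M : LTW F ar Δ Q) : Prop :=
  ∀ q : Q, ∃ t w, M.semState t q = some w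

/-- `w^n`, the `n`-fold concatenation of the word `w`. -/
def listPow {Δ : Type} (w : List Δ) : ℕ → List Δ
  | 0 => []
  | n + 1 => w ++ listPow w n

/-- `lcp L = ε`: the only common prefix of all words of `L` is the empty word. -/
def LcpEps {Δ : Type} (L : Set (List Δ)) : Prop :=
  ∀ w : List Δ, (∀ v ∈ L, w <+: v) → w = []

/-- `lcs L = ε`: the only common suffix of all words of `L` is the empty word. -/
def LcsEps {Δ : Type} (L : Set (List Δ)) : Prop :=
  ∀ w : List Δ, (∀ v ∈ L, w <:+ v) → w = []

/-- A language is earliest if `lcp L = lcs L = ε`. -/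
def EarliestLang {Δ : Type} (L : Set (List Δ)) : Prop := LcpEps L ∧ LcsEps L

/-- `L ⊆ w*`. -/
def SubPow {Δ : Type} (w : List Δ) (L : Set (List Δ)) : Prop :=
  ∀ v ∈ L, ∃ n : ℕ, v = listPow w n

/-- `L` is periodic of period `w`: `w` is a smallest word with `L ⊆ w*`. -/
def PeriodicOf {Δ : Type} (L : Set (List Δ)) (w : List Δ) : Prop :=
  SubPow w L ∧ ∀ w' : List Δ, SubPow w' L → w.length ≤ w'.length

/-- `L` is periodic. -/
def Periodic {Δ : Type} (L : Set (List Δ)) : Prop := ∃ w, PeriodicOf L w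

/-- `L` is quasi-periodic on the left of handle `u` and period `w`:
`w` is a smallest word with `L ⊆ u w*`. -/
def QPLeftOf {Δ : Type} (L : Set (List Δ)) (u w : List Δ) : Prop :=
  (∀ v ∈ L, ∃ n : ℕ, v = u ++ listPow w n) ∧
  ∀ w' : List Δ, (∀ v ∈ L, ∃ n : ℕ, v = u ++ listPow w' n) → w.length ≤ w'.length

/-- `L` is quasi-periodic on the right of handle `u` and period `w`:
`w` is a smallest word with `L ⊆ w* u`. -/
def QPRightOf {Δ : Type} (L : Set (List Δ)) (u w : List Δ) : Prop :=
  (∀ v ∈ L, ∃ n : ℕ, v = listPow w n ++ u) ∧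
  ∀ w' : List Δ, (∀ v ∈ L, ∃ n : ℕ, v = listPow w' n ++ u) → w.length ≤ w'.length

/-- `L` is quasi-periodic (on the left or on the right). -/
def QuasiPeriodic {Δ : Type} (L : Set (List Δ)) : Prop :=
  (∃ u w, QPLeftOf L u w) ∨ (∃ u w, QPRightOf L u w)

/-- The language `L u = { v u : v ∈ L }`. -/
def appendLang {Δ : Type} (L : Set (List Δ)) (u : List Δ) : Set (List Δ) :=
  {v | ∃ x ∈ L, v = x ++ u}

/-- The language `L₁ u L₂ = { a u b : a ∈ L₁, b ∈ L₂ }`. -/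
def pairLang {Δ : Type} (L₁ : Set (List Δ)) (u : List Δ) (L₂ : Set (List Δ)) :
    Set (List Δ) :=
  {v | ∃ a ∈ L₁, ∃ b ∈ L₂, v = a ++ u ++ b}

/-- An LTW is earliest: every state `q` satisfies `lcp L_q = lcs L_q = ε`, and in every rule
every part `qᵢ(x) uᵢ` satisfies `lcp (L_{qᵢ} uᵢ) = ε`. -/
def LTW.Earliest {F Δ Q : Type} {ar : F → ℕ} (M : LTW F ar Δ Q) : Prop :=
  (∀ q : Q, EarliestLang (M.lang q)) ∧
  ∀ (q : Q) (f : F) (r : LTWRule Δ Q (ar f)), M.rules q f = some r →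
    ∀ i : Fin (ar f), LcpEps (appendLang (M.lang (r.st i)) (r.word i.succ))

/-- An erasing state: `L_q = {ε}`. -/
def LTW.Erasing {F Δ Q : Type} {ar : F → ℕ} (M : LTW F ar Δ Q) (q : Q) : Prop :=
  M.lang q = {([] : List Δ)}

/-- Erase-ordered: in every rule, if `qᵢ` is erasing then every later `q_j` is erasing,
`σ(i) ≤ σ(j)` and `u_j = ε`. -/
def LTW.EraseOrdered {F Δ Q : Type} {ar : F → ℕ} (M : LTW F ar Δ Q) : Prop :=
  ∀ (q : Q) (f : F) (r : LTWRule Δ Q (ar f)), M.rules q f = some r →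
    ∀ i j : Fin (ar f), M.Erasing (r.st i) → i ≤ j →
      M.Erasing (r.st j) ∧ r.perm i ≤ r.perm j ∧ r.word j.succ = []

/-- Co-reachable pairs of states of two transducers over the same input alphabet. -/
inductive CoReach {F Δ Q₁ Q₂ : Type} {ar : F → ℕ}
    (M₁ : LTW F ar Δ Q₁) (M₂ : LTW F ar Δ Q₂) : Q₁ → Q₂ → Prop
  | base : CoReach M₁ M₂ M₁.init M₂.init
  | step {q₁ : Q₁} {q₂ : Q₂} {f : F} {r₁ : LTWRule Δ Q₁ (ar f)} {r₂ : LTWRule Δ Q₂ (ar f)}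
      {i j : Fin (ar f)} :
      CoReach M₁ M₂ q₁ q₂ → M₁.rules q₁ f = some r₁ → M₂.rules q₂ f = some r₂ →
      r₁.perm i = r₂.perm j → CoReach M₁ M₂ (r₁.st i) (r₂.st j)

/-- Two LTWs are same-ordered: co-reachable states either both lack a rule for `f`,
or have rules for `f` with the same permutation. -/
def SameOrdered {F Δ Q₁ Q₂ : Type} {ar : F → ℕ}
    (M₁ : LTW F ar Δ Q₁) (M₂ : LTW F ar Δ Q₂) : Prop :=
  ∀ q₁ q₂, CoReach M₁ M₂ q₁ q₂ → ∀ f : F,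
    (M₁.rules q₁ f = none ∧ M₂.rules q₂ f = none) ∨
    ∃ (r₁ : LTWRule Δ Q₁ (ar f)) (r₂ : LTWRule Δ Q₂ (ar f)),
      M₁.rules q₁ f = some r₁ ∧ M₂.rules q₂ f = some r₂ ∧ r₁.perm = r₂.perm

/-- `Accessible q p`: state `p` is accessible from state `q`. -/
inductive LTW.Accessible {F Δ Q : Type} {ar : F → ℕ} (M : LTW F ar Δ Q) : Q → Q → Prop
  | refl (q : Q) : M.Accessible q q
  | step {q p : Q} {f : F} {r : LTWRule Δ Q (ar f)} (i : Fin (ar f)) :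
      M.Accessible q p → M.rules p f = some r → M.Accessible q (r.st i)

/-- Partial normal form. -/
def LTW.PartialNormalForm {F Δ Q : Type} {ar : F → ℕ} (M : LTW F ar Δ Q) : Prop :=
  (∀ q : Q, QuasiPeriodic (M.lang q) → EarliestLang (M.lang q)) ∧
  M.EraseOrdered ∧
  ∀ (q : Q) (f : F) (r : LTWRule Δ Q (ar f)), M.rules q f = some r →
    ∀ (i : ℕ) (hi : i + 1 < ar f),
      QuasiPeriodic (pairLang (M.lang (r.st ⟨i, Nat.lt_of_succ_lt hi⟩))
          (r.word (Fin.succ ⟨i, Nat.lt_of_succ_lt hi⟩)) (M.lang (r.st ⟨i + 1, hi⟩))) →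
      EarliestLang (pairLang (M.lang (r.st ⟨i, Nat.lt_of_succ_lt hi⟩))
          (r.word (Fin.succ ⟨i, Nat.lt_of_succ_lt hi⟩)) (M.lang (r.st ⟨i + 1, hi⟩))) ∧
      r.perm ⟨i, Nat.lt_of_succ_lt hi⟩ < r.perm ⟨i + 1, hi⟩

section words
variable {Δ : Type}

lemma exists_lcp (L : Set (List Δ)) (hL : L.Nonempty) :
    ∃ p : List Δ, (∀ x ∈ L, p <+: x) ∧ ∀ z, (∀ x ∈ L, p ++ z <+: x) → z = [] := by
  obtain ⟨x0, hx0⟩ := hL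
  classical
  let P : ℕ → Prop := fun n => ∃ p : List Δ, p.length = n ∧ ∀ x ∈ L, p <+: x
  have h0 : P 0 := ⟨[], rfl, fun x _ => List.nil_prefix⟩
  obtain ⟨p, hp, hpp⟩ := Nat.findGreatest_spec (P := P) (Nat.zero_le x0.length) h0
  refine ⟨p, hpp, fun z hz => ?_⟩
  have h1 : (p ++ z).length ≤ x0.length := (hz x0 hx0).length_le
  have h2 := Nat.le_findGreatest (P := P) h1 ⟨p ++ z, rfl, hz⟩
  rw [← hp] at h2
  simp at h2
  exact h2

lemma lcpEps_of_nil {L : Set (List Δ)} (h : [] ∈ L) : LcpEps L := by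
  intro w hw
  simpa using hw [] h

lemma lcsEps_of_nil {L : Set (List Δ)} (h : [] ∈ L) : LcsEps L := by
  intro w hw
  simpa using hw [] h

lemma nil_of_no_nil {C : Set (List Δ)} (hC : LcpEps C) (hn : [] ∉ C) (w v : List Δ)
    (hv : ∀ x ∈ C, v <+: x ++ w) : v = [] := by
  cases v with
  | nil => rfl
  | cons a v =>
    exfalso
    have := hC [a] (fun x hx => by
      cases x with
      | nil => exact absurd hx hn
      | cons b x =>
        have := hv _ hx
        rw [List.cons_append, List.cons_prefix_cons] at this
        simp [this.1])
    simp at this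

lemma push_prefix {C : Set (List Δ)} (hC : LcpEps C) (w v : List Δ)
    (hv : ∀ x ∈ C, v <+: x ++ w) : v <+: w ∧ ∀ x ∈ C, v <+: x ++ v := by
  by_cases hn : [] ∈ C
  · have h1 : v <+: w := by simpa using hv [] hn
    refine ⟨h1, fun x hx => ?_⟩
    refine List.prefix_of_prefix_length_le (hv x hx) ?_ (by simp)
    obtain ⟨s, rfl⟩ := h1
    exact ⟨s, by simp⟩
  · have := nil_of_no_nil hC hn w v hv
    subst this
    simp

lemma prefix_pow {x v : List Δ} (h : v <+: x ++ v) (n : ℕ) : v <+: listPow x n ++ v := by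
  induction n with
  | zero => simp [listPow]
  | succ n ih =>
    obtain ⟨s, hs⟩ := ih
    have : x ++ v <+: listPow x (n+1) ++ v := by
      refine ⟨s, ?_⟩
      simp only [listPow, List.append_assoc]
      rw [← hs]
      
    exact h.trans this

lemma length_pow (x : List Δ) (n : ℕ) : (listPow x n).length = n * x.length := by
  induction n with
  | zero => simp [listPow]
  | succ n ih => simp [listPow, ih]; ring

/-- prefix of `x ++ v` long enough implies `x` prefix -/
lemma comm_of_long {x y v : List Δ} (hx : v <+: x ++ v) (hy : v <+: y ++ v)
    (hl : x.length + y.length ≤ v.length) : x ++ y = y ++ x := by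
  have key : ∀ a b : List Δ, v <+: a ++ v → v <+: b ++ v → a.length + b.length ≤ v.length →
      a ++ b <+: v := by
    intro a b ha hb hl
    have hav : a <+: v :=
      List.prefix_of_prefix_length_le (List.prefix_append a v) ha (by omega)
    have hbv : b <+: v :=
      List.prefix_of_prefix_length_le (List.prefix_append b v) hb (by omega)
    obtain ⟨s, hs⟩ := hbv
    refine List.prefix_of_prefix_length_le (l₃ := a ++ v) ?_ ha (by simpa using hl)
    exact ⟨s, by rw [← hs]; simp⟩
  have h1 := key x y hx hy hl
  have h2 := key y x hy hx (by omega)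
  exact (List.prefix_of_prefix_length_le h1 h2 (by simp; omega)).eq_of_length (by simp; omega)

lemma finite_conj (C : Set (List Δ)) :
    ∃ S : Set (List Δ), S.Finite ∧ ∀ v, (∀ x ∈ C, v <+: x ++ v) →
      ∃ v' ∈ S, ∀ y ∈ C, (y ++ v).drop v.length = (y ++ v').drop v'.length := by
  by_cases h0 : ∀ x ∈ C, x = []
  · refine ⟨{[]}, Set.finite_singleton _, fun v hv => ⟨[], rfl, fun y hy => ?_⟩⟩
    rw [h0 y hy]; simp
  push Not at h0
  obtain ⟨x, hx, hx0⟩ := h0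
  have hxl : 0 < x.length := List.length_pos_iff.mpr hx0
  have hfin : ∀ w : List Δ, {v : List Δ | v <+: w}.Finite := by
    intro w
    classical
    exact (w.inits.toFinset.finite_toSet).subset (fun v hv => by simpa using hv)
  by_cases hc : ∀ y ∈ C, x ++ y = y ++ x
  · refine ⟨{v | v <+: x}, hfin x, ?_⟩
    intro v
    induction hn : v.length using Nat.strong_induction_on generalizing v with
    | _ n ih =>
    intro hv
    by_cases hlt : v.length ≤ x.length
    · exact ⟨v, List.prefix_of_prefix_length_le (hv x hx) (List.prefix_append x v) hlt,
        fun _ _ => by rw [hn]⟩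
    · have hxv : x <+: v :=
        List.prefix_of_prefix_length_le (List.prefix_append x v) (hv x hx) (by omega)
      obtain ⟨v1, rfl⟩ := hxv
      have hh : ∀ y ∈ C, ∃ d, y ++ v1 = v1 ++ d := by
        intro y hy
        obtain ⟨d, hd⟩ := hv y hy
        refine ⟨d, ?_⟩
        rw [← List.append_assoc, ← hc y hy] at hd
        simp only [List.append_assoc, List.append_cancel_left_eq] at hd
        exact hd.symm
      obtain ⟨v', hv', he⟩ := ih v1.length (by simp at hn; omega) v1 rfl
        (fun y hy => by obtain ⟨d, hd⟩ := hh y hy; exact ⟨d, hd.symm⟩)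
      refine ⟨v', hv', fun y hy => ?_⟩
      rw [← he y hy, ← hn]
      rw [← List.append_assoc, ← hc y hy, List.append_assoc, List.length_append,
        ← List.drop_drop, List.drop_left]
  · push Not at hc
    obtain ⟨y, hy, hne⟩ := hc
    refine ⟨{v | v <+: listPow x (x.length + y.length)}, hfin _, fun v hv => ⟨v, ?_, fun _ _ => rfl⟩⟩
    refine List.prefix_of_prefix_length_le (prefix_pow (hv x hx) _) (List.prefix_append _ _) ?_
    rw [length_pow]
    by_contra hlt
    refine hne (comm_of_long (hv x hx) (hv y hy) ?_)
    nlinarith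

lemma interleave_zero (u : Fin 1 → List Δ) (ws : Fin 0 → List Δ) :
    interleave 0 u ws = u 0 := by simp [interleave]

lemma interleave_succ (n : ℕ) (u : Fin (n + 2) → List Δ) (ws : Fin (n+1) → List Δ) :
    interleave (n+1) u ws = u 0 ++ ws 0 ++
      interleave n (fun i => u i.succ) (fun i => ws i.succ) := by
  simp [interleave, List.finRange_succ, List.foldr_map]

lemma interleave_last (n : ℕ) (u : Fin (n + 1) → List Δ) (ws : Fin n → List Δ) (v : List Δ) :
    interleave n (fun i => if i = Fin.last n then u i ++ v else u i) ws
      = interleave n u ws ++ v := by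
  induction n with
  | zero => simp [interleave_zero]
  | succ n ih =>
    rw [interleave_succ, interleave_succ]
    have := ih (fun i => u i.succ) (fun i => ws i.succ)
    simp only [List.append_assoc, ← this]
    rw [if_neg (by simp [Fin.ext_iff])]
    congr 2
    congr 1
    funext i
    simp only [← Fin.succ_last, Fin.succ_inj]

lemma interleave_snoc (n : ℕ) (u : Fin (n + 2) → List Δ) (ws : Fin (n+1) → List Δ) :
    interleave (n+1) u ws = interleave n (fun i => u i.castSucc) (fun i => ws i.castSucc)
      ++ ws (Fin.last n) ++ u (Fin.last (n+1)) := by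
  induction n with
  | zero => simp [interleave_succ, interleave_zero]
  | succ n ih =>
    rw [interleave_succ, ih, interleave_succ]
    simp

lemma interleave_rev (n : ℕ) (u : Fin (n + 1) → List Δ) (ws : Fin n → List Δ) :
    interleave n (fun i => (u i.rev).reverse) (fun i => (ws i.rev).reverse)
      = (interleave n u ws).reverse := by
  induction n with
  | zero => simp [interleave_zero]
  | succ n ih =>
    rw [interleave_succ, interleave_snoc n u ws]
    have := ih (fun i => u i.castSucc) (fun i => ws i.castSucc)
    simp only [List.reverse_append, ← this]
    simp [Fin.rev_succ]

lemma interleave_prefix (n : ℕ) (u : Fin (n+1) → List Δ) (A : Fin n → Set (List Δ))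
    (hne : ∀ i, (A i).Nonempty) (hA : ∀ i, LcpEps (appendLang (A i) (u i.succ)))
    (w : List Δ) (hw : ∀ ws : Fin n → List Δ, (∀ i, ws i ∈ A i) → w <+: interleave n u ws) :
    w <+: u 0 := by
  induction n generalizing w with
  | zero => simpa [interleave_zero] using hw (fun i => i.elim0) (fun i => i.elim0)
  | succ n ih =>
    have hw' : ∀ x ∈ A 0, ∀ ws : Fin n → List Δ, (∀ i, ws i ∈ A i.succ) →
        w <+: u 0 ++ (x ++ interleave n (fun i => u i.succ) ws) := by
      intro x hx ws hws
      have := hw (Fin.cons x ws) (fun i => by refine Fin.cases ?_ ?_ i <;> simpa)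
      simpa [interleave_succ] using this
    choose ws0 hws0 using fun i : Fin n => hne i.succ
    obtain ⟨x0, hx0⟩ := hne 0
    rcases List.prefix_or_prefix_of_prefix (hw' x0 hx0 ws0 hws0) (List.prefix_append _ _) with h | h
    · exact h
    obtain ⟨z, rfl⟩ := h
    have hz : ∀ x ∈ A 0, ∀ ws : Fin n → List Δ, (∀ i, ws i ∈ A i.succ) →
        z <+: x ++ interleave n (fun i => u i.succ) ws := fun x hx ws hws => by
      have := hw' x hx ws hws
      rwa [List.prefix_append_right_inj] at this
    suffices z = [] by simp [this]
    by_cases hn : [] ∈ appendLang (A 0) (u (Fin.succ 0))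
    · obtain ⟨x, hx, hxu⟩ := hn
      have hxu' := List.append_eq_nil_iff.mp hxu.symm
      have := ih (fun i => u i.succ) (fun i => A i.succ) (fun i => hne _) (fun i => hA _) z
        (fun ws hws => by simpa [hxu'.1] using hz x hx ws hws)
      rw [hxu'.2] at this
      simpa using this
    · refine nil_of_no_nil (hA 0) hn
        ((interleave n (fun i => u i.succ) ws0).drop (u (Fin.succ 0)).length) z ?_
      rintro _ ⟨x, hx, rfl⟩
      have := hz x hx ws0 hws0
      have e : interleave n (fun i => u i.succ) ws0 = u (Fin.succ 0) ++
          (interleave n (fun i => u i.succ) ws0).drop (u (Fin.succ 0)).length := by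
        simp [interleave]
      rw [e] at this
      simpa using this

end words
section trans
variable {F Δ Q Q' Q'' : Type} {ar : F → ℕ}

lemma semState_node (M : LTW F ar Δ Q) (f : F) (ts : Fin (ar f) → RTree F ar) (q : Q)
    (w : List Δ) :
    M.semState (.node f ts) q = some w ↔ ∃ (r : LTWRule Δ Q (ar f)) (ws : Fin (ar f) → List Δ),
      M.rules q f = some r ∧ (∀ i, M.semState (ts (r.perm i)) (r.st i) = some (ws i)) ∧
      w = interleave (ar f) r.word ws := by
  rw [LTW.semState]
  cases hr : M.rules q f with
  | none => simp
  | some r =>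
    simp only
    constructor
    · intro h
      split_ifs at h with hh
      refine ⟨r, fun i => _, rfl, fun i => (Option.some_get (hh i)).symm, ?_⟩
      simpa using h.symm
    · rintro ⟨r', ws, hr', hws, rfl⟩
      obtain rfl : r = r' := by simpa using hr'
      rw [dif_pos (fun i => by simp [hws i])]
      simp [hws]

/-- `M'` is a relabelled cover of `M` along `π`. -/
def Cov (M : LTW F ar Δ Q) (M' : LTW F ar Δ Q') (π : Q' → Q) : Prop :=
  π M'.init = M.init ∧ ∀ q' f, (M.rules (π q') f = none ∧ M'.rules q' f = none) ∨
    ∃ r r', M.rules (π q') f = some r ∧ M'.rules q' f = some r' ∧ r.perm = r'.perm ∧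
      ∀ i, π (r'.st i) = r.st i

lemma Cov.comp {M : LTW F ar Δ Q} {M' : LTW F ar Δ Q'} {M'' : LTW F ar Δ Q''}
    {π : Q' → Q} {π' : Q'' → Q'} (h : Cov M M' π) (h' : Cov M' M'' π') :
    Cov M M'' (π ∘ π') := by
  refine ⟨by simp [h'.1, h.1], fun q f => ?_⟩
  rcases h'.2 q f with ⟨h1, h2⟩ | ⟨r, r', h1, h2, h3, h4⟩
  · rcases h.2 (π' q) f with ⟨g1, g2⟩ | ⟨s, s', g1, g2, g3, g4⟩
    · exact .inl ⟨g1, h2⟩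
    · simp [h1] at g2
  · rcases h.2 (π' q) f with ⟨g1, g2⟩ | ⟨s, s', g1, g2, g3, g4⟩
    · simp [h1] at g2
    · obtain rfl : r = s' := by simpa [h1] using g2
      exact .inr ⟨s, r', g1, h2, g3.trans h3, fun i => by simp [h4, g4]⟩

lemma Cov.sameOrdered {M : LTW F ar Δ Q} {M' : LTW F ar Δ Q'} {π : Q' → Q} (h : Cov M M' π) :
    SameOrdered M M' := by
  have key : ∀ q q', CoReach M M' q q' → q = π q' := by
    intro q q' hc
    induction hc with
    | base => exact h.1.symm
    | @step q₁ q₂ f r₁ r₂ i j _ h1 h2 h3 ih =>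
      subst ih
      rcases h.2 q₂ f with ⟨g1, g2⟩ | ⟨s, s', g1, g2, g3, g4⟩
      · simp [h1] at g1
      · obtain rfl : r₁ = s := by simpa [h1] using g1
        obtain rfl : r₂ = s' := by simpa [h2] using g2
        rw [g3] at h3
        rw [r₂.perm.injective h3, g4]
  intro q q' hc f
  rw [key q q' hc]
  rcases h.2 q' f with h | ⟨s, s', g1, g2, g3, g4⟩
  · exact .inl h
  · exact .inr ⟨s, s', g1, g2, g3⟩

lemma Cov.dom {M : LTW F ar Δ Q} {M' : LTW F ar Δ Q'} {π : Q' → Q} (h : Cov M M' π)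
    (t : RTree F ar) : ∀ q' w, M.semState t (π q') = some w → ∃ w', M'.semState t q' = some w' := by
  induction t with
  | node f ts ih =>
    intro q' w hw
    rw [semState_node] at hw
    obtain ⟨r, ws, hr, hws, rfl⟩ := hw
    rcases h.2 q' f with ⟨g1, g2⟩ | ⟨s, s', g1, g2, g3, g4⟩
    · simp [hr] at g1
    · obtain rfl : r = s := by simpa [hr] using g1
      have : ∀ i, ∃ w', M'.semState (ts (s'.perm i)) (s'.st i) = some w' := fun i =>
        ih _ _ (ws i) (by rw [g4, ← g3]; exact hws i)
      choose ws' hws' using this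
      exact ⟨_, (semState_node _ _ _ _ _).mpr ⟨s', ws', g2, hws', rfl⟩⟩

lemma Cov.nonemptyDoms {M : LTW F ar Δ Q} {M' : LTW F ar Δ Q'} {π : Q' → Q} (h : Cov M M' π)
    (hd : M.NonemptyDoms) : M'.NonemptyDoms := fun q' => by
  obtain ⟨t, w, hw⟩ := hd (π q')
  exact ⟨t, h.dom t q' w hw⟩

/-- reversed rule -/
def LTWRule.rev {n : ℕ} (r : LTWRule Δ Q n) : LTWRule Δ Q n where
  word i := (r.word i.rev).reverse
  st i := r.st i.rev
  perm := Fin.revPerm.trans r.perm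

/-- reversed transducer -/
def LTW.rev (M : LTW F ar Δ Q) : LTW F ar Δ Q where
  pre := M.post.reverse
  init := M.init
  post := M.pre.reverse
  rules q f := (M.rules q f).map LTWRule.rev

lemma semState_rev (M : LTW F ar Δ Q) (t : RTree F ar) :
    ∀ q, M.rev.semState t q = (M.semState t q).map List.reverse := by
  induction t with
  | node f ts ih =>
    intro q
    ext w
    rw [semState_node]
    simp only [Option.map_eq_some_iff, semState_node]
    constructor
    · rintro ⟨r, ws, hr, hws, rfl⟩
      simp only [LTW.rev, Option.map_eq_some_iff] at hr
      obtain ⟨r, hr, rfl⟩ := hr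
      refine ⟨_, ⟨r, fun i => (ws i.rev).reverse, hr, fun i => ?_, rfl⟩, ?_⟩
      · have := hws i.rev
        rw [ih] at this
        simp only [LTWRule.rev, Equiv.trans_apply, Fin.revPerm_apply, Fin.rev_rev,
          Option.map_eq_some_iff] at this
        obtain ⟨a, ha, hb⟩ := this
        rw [ha]; simp [← hb]
      · rw [← interleave_rev]
        simp [LTWRule.rev]
    · rintro ⟨_, ⟨r, ws, hr, hws, rfl⟩, rfl⟩
      refine ⟨r.rev, fun i => (ws i.rev).reverse, by simp [LTW.rev, hr], fun i => ?_, ?_⟩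
      · rw [ih]
        simp [LTWRule.rev, hws]
      · rw [← interleave_rev]
        rfl

lemma sem_rev (M : LTW F ar Δ Q) (t : RTree F ar) :
    M.rev.sem t = (M.sem t).map List.reverse := by
  simp only [LTW.sem, semState_rev, Option.map_map]
  congr 1
  funext w
  simp [LTW.rev]

lemma mem_lang_rev (M : LTW F ar Δ Q) (q : Q) (w : List Δ) :
    w ∈ M.rev.lang q ↔ w.reverse ∈ M.lang q := by
  simp only [LTW.lang, Set.mem_ofPred_eq, semState_rev, Option.map_eq_some_iff]
  constructor
  · rintro ⟨t, a, h, rfl⟩; exact ⟨t, by simpa⟩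
  · rintro ⟨t, h⟩; exact ⟨t, _, h, by simp⟩

lemma nonemptyDoms_rev {M : LTW F ar Δ Q} (h : M.NonemptyDoms) : M.rev.NonemptyDoms := fun q => by
  obtain ⟨t, w, hw⟩ := h q
  exact ⟨t, w.reverse, by simp [semState_rev, hw]⟩

lemma lcsEps_rev {M : LTW F ar Δ Q} {q : Q} (h : LcpEps (M.lang q)) : LcsEps (M.rev.lang q) := by
  intro w hw
  have := h w.reverse (fun v hv => by
    have := hw v.reverse (by rw [mem_lang_rev]; simpa)
    rwa [← List.reverse_suffix, List.reverse_reverse])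
  simpa using this

lemma Cov.rev {M : LTW F ar Δ Q} {M' : LTW F ar Δ Q'} {π : Q' → Q} (h : Cov M.rev M' π) :
    Cov M M'.rev π := by
  refine ⟨h.1, fun q f => ?_⟩
  rcases h.2 q f with ⟨g1, g2⟩ | ⟨s, s', g1, g2, g3, g4⟩
  · left
    simpa [LTW.rev, g2] using g1
  · right
    simp only [LTW.rev, Option.map_eq_some_iff] at g1
    obtain ⟨r, hr, rfl⟩ := g1
    refine ⟨r, s'.rev, hr, by simp [LTW.rev, g2], ?_, fun i => ?_⟩
    · simp only [LTWRule.rev, ← g3]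
      ext i; simp
    · simp [LTWRule.rev, g4]

/-! the left pushing construction -/

lemma lang_nonempty {M : LTW F ar Δ Q} (hd : M.NonemptyDoms) (q : Q) : (M.lang q).Nonempty := by
  obtain ⟨t, w, h⟩ := hd q
  exact ⟨w, t, h⟩

/-- longest common prefix of a state language -/
noncomputable def lcpSt (M : LTW F ar Δ Q) (hd : M.NonemptyDoms) (q : Q) : List Δ :=
  (exists_lcp (M.lang q) (lang_nonempty hd q)).choose

lemma lcpSt_prefix (M : LTW F ar Δ Q) (hd : M.NonemptyDoms) (q : Q) :
    ∀ x ∈ M.lang q, lcpSt M hd q <+: x :=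
  (exists_lcp (M.lang q) (lang_nonempty hd q)).choose_spec.1

/-- the core language -/
def core (M : LTW F ar Δ Q) (hd : M.NonemptyDoms) (q : Q) : Set (List Δ) :=
  {y | lcpSt M hd q ++ y ∈ M.lang q}

lemma lcpEps_core (M : LTW F ar Δ Q) (hd : M.NonemptyDoms) (q : Q) : LcpEps (core M hd q) := by
  intro w hw
  refine (exists_lcp (M.lang q) (lang_nonempty hd q)).choose_spec.2 w (fun x hx => ?_)
  obtain ⟨y, rfl⟩ := lcpSt_prefix M hd q x hx
  have := hw y hx
  rwa [← List.prefix_append_right_inj (lcpSt M hd q)] at this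

/-- admissible conjugators -/
def Adm (M : LTW F ar Δ Q) (hd : M.NonemptyDoms) (q : Q) (v : List Δ) : Prop :=
  ∀ y ∈ core M hd q, v <+: y ++ v

/-- conjugated state function -/
noncomputable def conjF (M : LTW F ar Δ Q) (hd : M.NonemptyDoms) (q : Q) (v : List Δ)
    (t : RTree F ar) : Option (List Δ) :=
  (M.semState t q).map fun x => (x.drop (lcpSt M hd q).length ++ v).drop v.length

/-- new states -/
def NState (M : LTW F ar Δ Q) (hd : M.NonemptyDoms) : Type :=
  {x : Q × (RTree F ar → Option (List Δ)) // ∃ v, Adm M hd x.1 v ∧ x.2 = conjF M hd x.1 v}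

lemma finite_NState [Finite Q] (M : LTW F ar Δ Q) (hd : M.NonemptyDoms) :
    Finite (NState M hd) := by
  have : {x : Q × (RTree F ar → Option (List Δ)) |
      ∃ v, Adm M hd x.1 v ∧ x.2 = conjF M hd x.1 v}.Finite := by
    choose S hS hS' using fun q => finite_conj (core M hd q)
    refine (Set.finite_iUnion (fun q => (hS q).image (fun v => (q, conjF M hd q v)))).subset ?_
    rintro ⟨q, D⟩ ⟨v, hv, hD⟩
    simp only at hv hD
    obtain ⟨v', hv', he⟩ := hS' q v hv
    refine Set.mem_iUnion.mpr ⟨q, v', hv', ?_⟩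
    simp only [Prod.mk.injEq, true_and, hD]
    funext t
    simp only [conjF]
    refine Option.map_congr (fun x hx => ?_)
    obtain ⟨y, rfl⟩ := lcpSt_prefix M hd q x ⟨t, hx⟩
    simp only [List.drop_left]
    exact (he y ⟨t, hx⟩).symm
  exact this.to_subtype

lemma conjF_spec (M : LTW F ar Δ Q) (hd : M.NonemptyDoms) (q : Q) (v : List Δ) (hv : Adm M hd q v)
    (t : RTree F ar) (x : List Δ) (hx : M.semState t q = some x) :
    ∃ d, conjF M hd q v t = some d ∧ x ++ v = lcpSt M hd q ++ v ++ d := by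
  obtain ⟨y, rfl⟩ := lcpSt_prefix M hd q x ⟨t, hx⟩
  obtain ⟨d, hd'⟩ := hv y ⟨t, hx⟩
  refine ⟨d, ?_, by simp [hd']⟩
  simp [conjF, hx, ← hd']

/-- language of new state -/
def nlang {M : LTW F ar Δ Q} {hd : M.NonemptyDoms} (s : NState M hd) : Set (List Δ) :=
  {w | ∃ t, s.1.2 t = some w}

lemma nlang_iff {M : LTW F ar Δ Q} {hd : M.NonemptyDoms} (s : NState M hd) (v : List Δ)
    (hv : Adm M hd s.1.1 v) (hs : s.1.2 = conjF M hd s.1.1 v) (d : List Δ) :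
    d ∈ nlang s ↔ ∃ y ∈ core M hd s.1.1, y ++ v = v ++ d := by
  constructor
  · rintro ⟨t, ht⟩
    rw [hs] at ht
    have ht' := ht
    simp only [conjF, Option.map_eq_some_iff] at ht'
    obtain ⟨x, hx, -⟩ := ht'
    obtain ⟨d', h1, h2⟩ := conjF_spec M hd _ v hv t x hx
    obtain rfl : d = d' := by simpa [ht] using h1
    obtain ⟨y, rfl⟩ := lcpSt_prefix M hd _ x ⟨t, hx⟩
    exact ⟨y, ⟨t, hx⟩, by simpa using h2⟩
  · rintro ⟨y, ⟨t, hy⟩, h⟩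
    obtain ⟨d', h1, h2⟩ := conjF_spec M hd _ v hv t _ hy
    refine ⟨t, ?_⟩
    rw [hs, h1]
    simp only [List.append_assoc, List.append_cancel_left_eq, h] at h2
    rw [h2]

lemma core_nonempty (M : LTW F ar Δ Q) (hd : M.NonemptyDoms) (q : Q) :
    (core M hd q).Nonempty := by
  obtain ⟨x, hx⟩ := lang_nonempty hd q
  obtain ⟨y, rfl⟩ := lcpSt_prefix M hd _ x hx
  exact ⟨y, hx⟩

lemma nlang_nonempty {M : LTW F ar Δ Q} {hd : M.NonemptyDoms} (s : NState M hd) :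
    (nlang s).Nonempty := by
  obtain ⟨v, hv, hs⟩ := s.2
  obtain ⟨y, hy⟩ := core_nonempty M hd s.1.1
  obtain ⟨d, h⟩ := hv y hy
  exact ⟨d, (nlang_iff s v hv hs d).mpr ⟨y, hy, h.symm⟩⟩

lemma nlang_cases {M : LTW F ar Δ Q} {hd : M.NonemptyDoms} (s : NState M hd) :
    [] ∈ nlang s ∨ nlang s = core M hd s.1.1 := by
  obtain ⟨v, hv, hs⟩ := s.2
  by_cases hn : [] ∈ core M hd s.1.1
  · left
    exact (nlang_iff s v hv hs _).mpr ⟨[], hn, by simp⟩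
  · right
    obtain rfl := nil_of_no_nil (lcpEps_core M hd s.1.1) hn v v hv
    ext d
    rw [nlang_iff s _ hv hs]
    simp

lemma lcpEps_nlang {M : LTW F ar Δ Q} {hd : M.NonemptyDoms} (s : NState M hd) :
    LcpEps (nlang s) := by
  rcases nlang_cases s with h | h
  · exact lcpEps_of_nil h
  · rw [h]; exact lcpEps_core _ _ _

lemma lcsEps_nlang {M : LTW F ar Δ Q} {hd : M.NonemptyDoms} (s : NState M hd)
    (hM : LcsEps (M.lang s.1.1)) : LcsEps (nlang s) := by
  rcases nlang_cases s with h | h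
  · exact lcsEps_of_nil h
  · rw [h]
    intro w hw
    refine hM w (fun x hx => ?_)
    obtain ⟨y, rfl⟩ := lcpSt_prefix M hd _ x hx
    exact (hw y hx).trans (List.suffix_append _ _)

lemma push (M : LTW F ar Δ Q) (hd : M.NonemptyDoms) (q : Q) (w : List Δ) :
    ∃ (a : List Δ) (s : NState M hd) (w' : List Δ), s.1.1 = q ∧
      LcpEps (appendLang (nlang s) w') ∧
      ∀ t x, M.semState t q = some x → ∀ d, s.1.2 t = some d → x ++ w = a ++ d ++ w' := by
  obtain ⟨y0, hy0⟩ := core_nonempty M hd q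
  obtain ⟨v, hv, hmax⟩ := exists_lcp (appendLang (core M hd q) w) ⟨_, y0, hy0, rfl⟩
  have hv' : ∀ x ∈ core M hd q, v <+: x ++ w := fun x hx => hv _ ⟨x, hx, rfl⟩
  obtain ⟨⟨w', rfl⟩, hadm⟩ := push_prefix (lcpEps_core M hd q) w v hv'
  let s : NState M hd := ⟨(q, conjF M hd q v), v, hadm, rfl⟩
  refine ⟨lcpSt M hd q ++ v, s, w', rfl, ?_, ?_⟩
  · intro z hz
    refine hmax z ?_
    rintro _ ⟨y, hy, rfl⟩
    obtain ⟨d, h⟩ := hadm y hy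
    have := hz _ ⟨d, (nlang_iff s v hadm rfl d).mpr ⟨y, hy, h.symm⟩, rfl⟩
    rwa [← List.append_assoc, ← h, List.append_assoc, List.prefix_append_right_inj]
  · intro t x hx d hdd
    obtain ⟨d', h1, h2⟩ := conjF_spec M hd q v hadm t x hx
    obtain rfl : d = d' := by
      have : some d = some d' := hdd.symm.trans h1
      simpa using this
    rw [← List.append_assoc, h2]

lemma pushAll (M : LTW F ar Δ Q) (hd : M.NonemptyDoms) (n : ℕ) (u : Fin (n+1) → List Δ)
    (st : Fin n → Q) :
    ∃ (u' : Fin (n+1) → List Δ) (st' : Fin n → NState M hd),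
      (∀ i, (st' i).1.1 = st i) ∧
      (∀ i, LcpEps (appendLang (nlang (st' i)) (u' i.succ))) ∧
      ∀ (ts : Fin n → RTree F ar) (xs ds : Fin n → List Δ),
        (∀ i, M.semState (ts i) (st i) = some (xs i)) →
        (∀ i, (st' i).1.2 (ts i) = some (ds i)) →
        interleave n u xs = interleave n u' ds := by
  induction n with
  | zero =>
    exact ⟨u, fun i => i.elim0, fun i => i.elim0, fun i => i.elim0, fun ts xs ds _ _ => by
      simp [interleave_zero]⟩
  | succ n ih =>
    obtain ⟨u1, st1, h1, h2, h3⟩ := ih (fun i => u i.succ) (fun i => st i.succ)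
    obtain ⟨a, s, w', g1, g2, g3⟩ := push M hd (st 0) (u1 0)
    refine ⟨Fin.cons (u 0 ++ a) (Fin.cons w' (fun i => u1 i.succ)), Fin.cons s st1, ?_, ?_, ?_⟩
    · intro i
      refine Fin.cases ?_ (fun i => ?_) i
      · simpa using g1
      · simpa using h1 i
    · intro i
      refine Fin.cases ?_ (fun i => ?_) i
      · simpa using g2
      · simpa using h2 i
    · intro ts xs ds hx hds
      have e1 := h3 (fun i => ts i.succ) (fun i => xs i.succ) (fun i => ds i.succ)
        (fun i => hx _) (fun i => by simpa using hds i.succ)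
      have e2 := g3 (ts 0) (xs 0) (hx 0) (ds 0) (by simpa using hds 0)
      rw [interleave_succ, interleave_succ, e1]
      have e3 : ∀ (b : Fin (n+1) → List Δ) (ws : Fin n → List Δ), interleave n b ws = b 0 ++
          (List.finRange n).foldr (fun i acc => ws i ++ b i.succ ++ acc) [] := fun _ _ => rfl
      rw [e3, e3]
      simp only [Fin.cons_zero, Fin.cons_succ, List.append_assoc] at e2 ⊢
      rw [← List.append_assoc (xs 0), e2]
      simp

lemma newRule (M : LTW F ar Δ Q) (hd : M.NonemptyDoms) (s : NState M hd) (f : F)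
    (r : LTWRule Δ Q (ar f)) (hr : M.rules s.1.1 f = some r) :
    ∃ r' : LTWRule Δ (NState M hd) (ar f), r.perm = r'.perm ∧
      (∀ i, (r'.st i).1.1 = r.st i) ∧
      (∀ i, LcpEps (appendLang (nlang (r'.st i)) (r'.word i.succ))) ∧
      ∀ (ts : Fin (ar f) → RTree F ar) (ds : Fin (ar f) → List Δ),
        (∀ i, (r'.st i).1.2 (ts (r.perm i)) = some (ds i)) →
        s.1.2 (.node f ts) = some (interleave _ r'.word ds) := by
  obtain ⟨v, hv, hs⟩ := s.2
  obtain ⟨u', st', h1, h2, h3⟩ := pushAll M hd (ar f)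
    (fun i => if i = Fin.last _ then r.word i ++ v else r.word i) r.st
  have hdef : ∀ (i) (t : RTree F ar) (d), (st' i).1.2 t = some d →
      ∃ x, M.semState t (r.st i) = some x := by
    intro i t d hdd
    obtain ⟨v', -, hs'⟩ := (st' i).2
    rw [hs'] at hdd
    simp only [conjF, Option.map_eq_some_iff, h1] at hdd
    obtain ⟨x, hx, -⟩ := hdd
    exact ⟨x, hx⟩
  have key : ∀ (ts : Fin (ar f) → RTree F ar) (ds : Fin (ar f) → List Δ),
      (∀ i, (st' i).1.2 (ts (r.perm i)) = some (ds i)) →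
      ∃ d, s.1.2 (.node f ts) = some d ∧
        interleave _ u' ds = lcpSt M hd s.1.1 ++ v ++ d := by
    intro ts ds hds
    choose xs hxs using fun i => hdef i _ _ (hds i)
    have hx : M.semState (.node f ts) s.1.1 = some (interleave _ r.word xs) :=
      (semState_node _ _ _ _ _).mpr ⟨r, xs, hr, hxs, rfl⟩
    obtain ⟨d, hd1, hd2⟩ := conjF_spec M hd s.1.1 v hv _ _ hx
    refine ⟨d, by rw [hs, hd1], ?_⟩
    rw [← hd2, ← interleave_last]
    exact (h3 (fun i => ts (r.perm i)) xs ds hxs hds).symm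
  have hpre : lcpSt M hd s.1.1 ++ v <+: u' 0 := by
    refine interleave_prefix _ u' (fun i => nlang (st' i)) (fun i => nlang_nonempty _) h2 _ ?_
    intro ws hws
    choose ts hts using hws
    obtain ⟨d, -, h⟩ := key (fun j => ts (r.perm.symm j)) ws (fun i => by simpa using hts i)
    exact ⟨d, h.symm⟩
  obtain ⟨c, hc⟩ := hpre
  refine ⟨⟨fun i => Fin.cases c (fun i => u' i.succ) i, st', r.perm⟩, rfl, h1, ?_, ?_⟩
  · intro i
    simpa using h2 i
  · intro ts ds hds
    obtain ⟨d, hd1, hd2⟩ := key ts ds hds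
    rw [hd1]
    congr 1
    simp only [interleave, ← hc] at hd2
    simp only [interleave, Fin.cases_zero, Fin.cases_succ]
    simp only [List.append_assoc, List.append_cancel_left_eq] at hd2 ⊢
    exact hd2.symm

open Classical in
/-- new rules -/
noncomputable def nrules (M : LTW F ar Δ Q) (hd : M.NonemptyDoms) (s : NState M hd) (f : F) :
    Option (LTWRule Δ (NState M hd) (ar f)) :=
  if h : ∃ r, M.rules s.1.1 f = some r then
    some (newRule M hd s f h.choose h.choose_spec).choose
  else none

lemma nrules_none {M : LTW F ar Δ Q} {hd : M.NonemptyDoms} {s : NState M hd} {f : F}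
    (h : M.rules s.1.1 f = none) : nrules M hd s f = none := by
  simp [nrules, h]

lemma nrules_some {M : LTW F ar Δ Q} {hd : M.NonemptyDoms} {s : NState M hd} {f : F}
    {r : LTWRule Δ Q (ar f)} (h : M.rules s.1.1 f = some r) :
    ∃ r' : LTWRule Δ (NState M hd) (ar f), nrules M hd s f = some r' ∧ r.perm = r'.perm ∧
      (∀ i, (r'.st i).1.1 = r.st i) ∧
      (∀ i, LcpEps (appendLang (nlang (r'.st i)) (r'.word i.succ))) ∧
      ∀ (ts : Fin (ar f) → RTree F ar) (ds : Fin (ar f) → List Δ),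
        (∀ i, (r'.st i).1.2 (ts (r.perm i)) = some (ds i)) →
        s.1.2 (.node f ts) = some (interleave _ r'.word ds) := by
  have hh : ∃ r, M.rules s.1.1 f = some r := ⟨r, h⟩
  have e : r = hh.choose := Option.some.inj (h.symm.trans hh.choose_spec)
  have sp := (newRule M hd s f hh.choose hh.choose_spec).choose_spec
  refine ⟨(newRule M hd s f hh.choose hh.choose_spec).choose, ?_, ?_⟩
  · rw [nrules, dif_pos hh]
  · rw [e]
    exact sp

lemma nsem {M : LTW F ar Δ Q} {hd : M.NonemptyDoms} (N : LTW F ar Δ (NState M hd))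
    (hN : N.rules = nrules M hd) (t : RTree F ar) : ∀ s, N.semState t s = s.1.2 t := by
  induction t with
  | node f ts ih =>
    intro s
    have hdom : ∀ (s : NState M hd) t, (∃ x, M.semState t s.1.1 = some x) ↔
        ∃ d, s.1.2 t = some d := by
      intro s t
      obtain ⟨v, -, hs⟩ := s.2
      rw [hs]
      simp only [conjF, Option.map_eq_some_iff]
      constructor
      · rintro ⟨x, hx⟩; exact ⟨_, x, hx, rfl⟩
      · rintro ⟨_, x, hx, -⟩; exact ⟨x, hx⟩
    ext w
    constructor
    · intro h
      rw [semState_node] at h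
      obtain ⟨r', ws, hr', hws, rfl⟩ := h
      rw [hN] at hr'
      cases hr : M.rules s.1.1 f with
      | none => rw [nrules_none hr] at hr'; simp at hr'
      | some r =>
        obtain ⟨r'', g0, g1, g2, g3, g4⟩ := nrules_some hr
        obtain rfl : r' = r'' := by simpa [hr'] using g0
        refine g4 ts ws (fun i => ?_)
        rw [← ih, g1]; exact hws i
    · intro h
      obtain ⟨x, hx⟩ := (hdom s _).mpr ⟨w, h⟩
      rw [semState_node] at hx
      obtain ⟨r, xs, hr, hxs, rfl⟩ := hx
      obtain ⟨r', g0, g1, g2, g3, g4⟩ := nrules_some hr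
      have : ∀ i, ∃ d, (r'.st i).1.2 (ts (r.perm i)) = some d := fun i =>
        (hdom _ _).mp ⟨xs i, by rw [g2]; exact hxs i⟩
      choose ds hds using this
      have e := g4 ts ds hds
      rw [h] at e
      rw [semState_node]
      refine ⟨r', ds, by rw [hN, g0], fun i => ?_, by simpa using e⟩
      rw [ih, ← g1, hds]

lemma phaseL [Finite Q] (M : LTW F ar Δ Q) (hd : M.NonemptyDoms) :
    ∃ (Q' : Type) (_ : Finite Q') (M' : LTW F ar Δ Q') (π : Q' → Q),
      M.sem = M'.sem ∧ Cov M M' π ∧ (∀ q, LcpEps (M'.lang q)) ∧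
      (∀ q, LcsEps (M.lang (π q)) → LcsEps (M'.lang q)) ∧
      ∀ (q : Q') (f : F) (r : LTWRule Δ Q' (ar f)), M'.rules q f = some r →
        ∀ i : Fin (ar f), LcpEps (appendLang (M'.lang (r.st i)) (r.word i.succ)) := by
  obtain ⟨a, s0, w', g1, g2, g3⟩ := push M hd M.init M.post
  let N : LTW F ar Δ (NState M hd) := ⟨M.pre ++ a, s0, w', nrules M hd⟩
  have hsem := nsem N rfl
  have hlang : ∀ s, N.lang s = nlang s := fun s => by
    ext w; simp [LTW.lang, nlang, hsem]
  have hcov : Cov M N (fun s => s.1.1) := by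
    refine ⟨g1, fun s f => ?_⟩
    cases hr : M.rules s.1.1 f with
    | none => exact .inl ⟨rfl, nrules_none hr⟩
    | some r =>
      obtain ⟨r', h0, h1, h2, -⟩ := nrules_some hr
      exact .inr ⟨r, r', rfl, h0, h1, h2⟩
  refine ⟨NState M hd, finite_NState M hd, N, fun s => s.1.1, ?_, hcov, ?_, ?_, ?_⟩
  · funext t
    have e : ∀ t, N.semState t N.init = s0.1.2 t := fun t => hsem t s0
    simp only [LTW.sem, e]
    cases hx : M.semState t M.init with
    | none =>
      obtain ⟨v, -, hs⟩ := s0.2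
      rw [hs]
      simp [conjF, g1, hx]
    | some x =>
      obtain ⟨d, hdd⟩ := hcov.dom t s0 x (by simpa only [g1] using hx)
      rw [hsem] at hdd
      have := g3 t x hx d hdd
      simp [hdd, N, this]
  · intro s; rw [hlang]; exact lcpEps_nlang s
  · intro s h; rw [hlang]; exact lcsEps_nlang s h
  · intro s f r' hr' i
    rw [hlang]
    cases hr : M.rules s.1.1 f with
    | none =>
      have := nrules_none hr
      rw [show nrules M hd s f = some r' from hr'] at this
      simp at this
    | some r =>
      obtain ⟨r'', h0, h1, h2, h3, h4⟩ := nrules_some hr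
      rw [show nrules M hd s f = some r' from hr'] at h0
      obtain rfl : r' = r'' := by simpa using h0
      exact h3 i

end trans

/-- every LTW has an equivalent earliest LTW that is same-ordered with it. -/
theorem exists_equivalent_earliest_sameOrdered
    {F Δ Q : Type} {ar : F → ℕ} [Finite Q]
    (M : LTW F ar Δ Q) (hdom : M.NonemptyDoms) :
    ∃ (Q' : Type) (_ : Finite Q') (M' : LTW F ar Δ Q'),
      M.sem = M'.sem ∧ M'.Earliest ∧ SameOrdered M M' := by
  obtain ⟨Q₁, _, N, π, hsem, hcov, hlcp, -, -⟩ := phaseL M.rev (nonemptyDoms_rev hdom)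
  have hcov1 : Cov M N.rev π := hcov.rev
  obtain ⟨Q₂, hf, M', π', hsem', hcov', hlcp', hlcs', hrule⟩ :=
    phaseL N.rev (hcov1.nonemptyDoms hdom)
  refine ⟨Q₂, hf, M', ?_, ⟨fun q => ⟨hlcp' q, hlcs' q (lcsEps_rev (hlcp _))⟩, hrule⟩,
    (hcov1.comp hcov').sameOrdered⟩
  rw [← hsem']
  funext t
  rw [sem_rev, ← hsem, sem_rev, Option.map_map]
  simp

end LTWpaper
end

section
/- For every linear tree-to-word transducer M there exists an equivalent erase-ordered linear tree-to-word transducer M'; moreover, if M is earliest then M' can be chosen to be earliest as well. -/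
namespace LTWpaper

section EraseOrderHelpers

open Classical in
noncomputable def eTail {Δ : Type} {n : ℕ} (E : Fin n → Prop) (u : Fin (n + 1) → List Δ) :
    List (Fin n) → List Δ
  | [] => []
  | i :: l => if E i then u i.succ ++ eTail E u l else []

theorem eTail_nil {Δ : Type} {n : ℕ} (E : Fin n → Prop) (u : Fin (n + 1) → List Δ)
    (h : ∀ i, E i → u i.succ = []) (l : List (Fin n)) : eTail E u l = [] := by
  induction l with
  | nil => rfl
  | cons i l ih =>
    rw [eTail]
    split_ifs with hE
    · rw [h i hE, ih]; rfl
    · rfl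

open Classical in
noncomputable def eWord {Δ : Type} {n : ℕ} (E : Fin n → Prop) (u : Fin (n + 1) → List Δ)
    (i : Fin n) : List Δ :=
  if E i then [] else u i.succ ++ eTail E u ((List.finRange n).drop (i + 1))

open Classical in
theorem fold_split {Δ : Type} {n : ℕ} (E : Fin n → Prop) (u : Fin (n + 1) → List Δ)
    (v ws : Fin n → List Δ) (hws : ∀ i, E i → ws i = []) (l : List (Fin n))
    (H : ∀ a i b, l = a ++ i :: b → ¬ E i → v i = u i.succ ++ eTail E u b) :
    l.foldr (fun i acc => ws i ++ u i.succ ++ acc) [] =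
      eTail E u l ++ (l.filter (fun i => ¬ E i)).foldr (fun i acc => ws i ++ v i ++ acc) [] := by
  induction l with
  | nil => rfl
  | cons i l ih =>
    have ih' := ih (fun a j b h hE => H (i :: a) j b (by rw [h]; rfl) hE)
    rw [List.foldr_cons, ih', eTail]
    by_cases hE : E i
    · simp [hE, hws i hE]
    · simp [hE, H [] i l rfl hE]

open Classical in
theorem fold_filter {Δ : Type} {n : ℕ} (E : Fin n → Prop)
    (v ws : Fin n → List Δ) (hws : ∀ i, E i → ws i = []) (hv : ∀ i, E i → v i = [])
    (l : List (Fin n)) :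
    l.foldr (fun i acc => ws i ++ v i ++ acc) [] =
      (l.filter (fun i => ¬ E i)).foldr (fun i acc => ws i ++ v i ++ acc) [] := by
  induction l with
  | nil => rfl
  | cons i l ih =>
    rw [List.foldr_cons, ih]
    by_cases hE : E i
    · simp [hE, hws i hE, hv i hE]
    · simp [hE]

open Classical in
noncomputable def eKey {n : ℕ} (E : Fin n → Prop) (p : Equiv.Perm (Fin n)) (i : Fin n) : ℕ :=
  if E i then n + p i else i

noncomputable def eSort {n : ℕ} (E : Fin n → Prop) (p : Equiv.Perm (Fin n)) :
    Equiv.Perm (Fin n) := Tuple.sort (eKey E p)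

theorem eSort_mono {n : ℕ} (E : Fin n → Prop) (p : Equiv.Perm (Fin n)) {i j : Fin n}
    (h : i ≤ j) : eKey E p (eSort E p i) ≤ eKey E p (eSort E p j) :=
  Tuple.monotone_sort (eKey E p) h

open Classical in
theorem filter_sort {n : ℕ} (E : Fin n → Prop) (p : Equiv.Perm (Fin n)) :
    ((List.finRange n).map (eSort E p)).filter (fun i => ¬ E i) =
      (List.finRange n).filter (fun i => ¬ E i) := by
  have hp : ((List.finRange n).map (eSort E p)).Perm (List.finRange n) := by
    rw [List.perm_ext_iff_of_nodup ((List.nodup_finRange n).map (eSort E p).injective)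
      (List.nodup_finRange n)]
    intro a
    simp only [List.mem_map, List.mem_finRange, true_and, iff_true]
    exact (eSort E p).surjective a
  have hs : (List.finRange n).Pairwise (· ≤ ·) :=
    (List.pairwise_lt_finRange n).imp (fun h => le_of_lt h)
  refine List.Perm.eq_of_pairwise (le := fun a b => a ≤ b) (fun a b _ _ h h' => le_antisymm h h')
    ?_ (hs.filter _) (hp.filter _)
  rw [List.pairwise_filter]
  rw [List.pairwise_map]
  refine hs.imp ?_
  intro a b hab ha hb
  have := eSort_mono E p hab
  simp only [decide_eq_true_eq] at ha hb
  simpa [eKey, ha, hb] using this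

noncomputable def eRule {Δ Q : Type} {n : ℕ} (E : Q → Prop) (r : LTWRule Δ Q n) :
    LTWRule Δ Q n where
  word := Fin.cons (r.word 0 ++ eTail (fun i => E (r.st i)) r.word (List.finRange n))
    (fun j => eWord (fun i => E (r.st i)) r.word (eSort (fun i => E (r.st i)) r.perm j))
  st := fun i => r.st (eSort (fun i => E (r.st i)) r.perm i)
  perm := (eSort (fun i => E (r.st i)) r.perm).trans r.perm

theorem eRule_interleave {Δ Q : Type} {n : ℕ} (E : Q → Prop) (r : LTWRule Δ Q n)
    (ws : Fin n → List Δ) (hws : ∀ i, E (r.st i) → ws i = []) :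
    interleave n (eRule E r).word (fun i => ws (eSort (fun i => E (r.st i)) r.perm i)) =
      interleave n r.word ws := by
  unfold interleave
  rw [fold_split (fun i => E (r.st i)) r.word (eWord (fun i => E (r.st i)) r.word) ws hws]
  · have h1 := fold_filter (fun i => E (r.st i)) (eWord (fun i => E (r.st i)) r.word) ws hws
      (fun i hi => by simp [eWord, hi])
      ((List.finRange n).map (eSort (fun i => E (r.st i)) r.perm))
    rw [filter_sort, List.foldr_map] at h1
    rw [← h1]
    simp [eRule]
  · intro a i b h hE
    have hi : (i : ℕ) = a.length := by
      have h2 : (List.finRange n)[a.length]? = some i := by rw [h]; simp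
      rw [List.getElem?_eq_some_iff] at h2
      obtain ⟨h3, h4⟩ := h2
      rw [← h4]; simp
    have : (List.finRange n).drop (i + 1) = b := by
      rw [h, hi]; simp
    simp [eWord, hE, this]

noncomputable def eLTW {F Δ Q : Type} {ar : F → ℕ} (M : LTW F ar Δ Q) : LTW F ar Δ Q where
  pre := M.pre
  init := M.init
  post := M.post
  rules := fun q f => (M.rules q f).map (eRule M.Erasing)

theorem eLTW_semState {F Δ Q : Type} {ar : F → ℕ} (M : LTW F ar Δ Q) (t : RTree F ar) :
    ∀ q, (eLTW M).semState t q = M.semState t q := by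
  induction t with
  | node f ts ih =>
    intro q
    rw [LTW.semState, LTW.semState]
    cases hr : M.rules q f with
    | none => simp [eLTW, hr]
    | some r =>
      have h' : (eLTW M).rules q f = some (eRule M.Erasing r) := by simp [eLTW, hr]
      rw [h']
      simp only [ih]
      by_cases h : ∀ i : Fin (ar f), (M.semState (ts (r.perm i)) (r.st i)).isSome
      · have h2 : ∀ i : Fin (ar f), (M.semState (ts ((eRule M.Erasing r).perm i))
            ((eRule M.Erasing r).st i)).isSome := fun i => h _
        rw [dif_pos h, dif_pos h2]
        congr 1
        refine eRule_interleave M.Erasing r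
          (fun i => (M.semState (ts (r.perm i)) (r.st i)).get (h i)) ?_
        intro i hE
        have : (M.semState (ts (r.perm i)) (r.st i)).get (h i) ∈ M.lang (r.st i) :=
          ⟨ts (r.perm i), by simp⟩
        rw [hE] at this
        exact this
      · have h2 : ¬ ∀ i : Fin (ar f), (M.semState (ts ((eRule M.Erasing r).perm i))
            ((eRule M.Erasing r).st i)).isSome := by
          intro h2
          apply h
          intro i
          have := h2 ((eSort (fun i => M.Erasing (r.st i)) r.perm).symm i)
          simpa [eRule] using this
        rw [dif_neg h, dif_neg h2]

theorem eLTW_lang {F Δ Q : Type} {ar : F → ℕ} (M : LTW F ar Δ Q) (q : Q) :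
    (eLTW M).lang q = M.lang q := by
  simp [LTW.lang, eLTW_semState]

theorem eLTW_eraseOrdered {F Δ Q : Type} {ar : F → ℕ} (M : LTW F ar Δ Q) :
    (eLTW M).EraseOrdered := by
  intro q f r' hr' i j hE hij
  simp only [LTW.Erasing, eLTW_lang] at hE ⊢
  simp only [eLTW, Option.map_eq_some_iff] at hr'
  obtain ⟨r, hr, rfl⟩ := hr'
  have hm := eSort_mono (fun i => M.Erasing (r.st i)) r.perm hij
  have hE1 : M.Erasing (r.st (eSort (fun i => M.Erasing (r.st i)) r.perm i)) := hE
  have hE2 : M.Erasing (r.st (eSort (fun i => M.Erasing (r.st i)) r.perm j)) := by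
    by_contra hc
    simp only [eKey, hE1, hc, if_true, if_false] at hm
    omega
  refine ⟨hE2, ?_, ?_⟩
  · simp only [eKey, hE1, hE2, if_true] at hm
    exact Fin.le_def.2 (Nat.le_of_add_le_add_left hm)
  · simp [eRule, eWord, hE2]

theorem eLTW_earliest {F Δ Q : Type} {ar : F → ℕ} (M : LTW F ar Δ Q) (h : M.Earliest) :
    (eLTW M).Earliest := by
  refine ⟨fun q => by rw [eLTW_lang]; exact h.1 q, ?_⟩
  intro q f r' hr' i
  rw [eLTW_lang]
  simp only [eLTW, Option.map_eq_some_iff] at hr'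
  obtain ⟨r, hr, rfl⟩ := hr'
  have hw : ∀ i, M.Erasing (r.st i) → r.word i.succ = [] := by
    intro i hE
    refine h.2 q f r hr i _ ?_
    rintro v ⟨x, hx, rfl⟩
    rw [hE] at hx
    rw [Set.mem_singleton_iff.1 hx]
    exact List.prefix_rfl
  have := h.2 q f r hr (eSort (fun i => M.Erasing (r.st i)) r.perm i)
  suffices hword : (eRule M.Erasing r).word i.succ =
      r.word (eSort (fun i => M.Erasing (r.st i)) r.perm i).succ by
    rw [hword]; exact this
  change eWord (fun i => M.Erasing (r.st i)) r.word
    (eSort (fun i => M.Erasing (r.st i)) r.perm i) = _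
  unfold eWord
  split_ifs with hE
  · exact (hw _ hE).symm
  · rw [eTail_nil _ _ hw, List.append_nil]

end EraseOrderHelpers

/-- every LTW has an equivalent erase-ordered LTW, which can be chosen
earliest whenever the original transducer is earliest. -/
theorem exists_equivalent_eraseOrdered
    {F Δ Q : Type} {ar : F → ℕ} [Finite Q]
    (M : LTW F ar Δ Q) (hdom : M.NonemptyDoms) :
    ∃ (Q' : Type) (_ : Finite Q') (M' : LTW F ar Δ Q'),
      M.sem = M'.sem ∧ M'.EraseOrdered ∧ (M.Earliest → M'.Earliest) := by
  refine ⟨Q, inferInstance, eLTW M, ?_, eLTW_eraseOrdered M, eLTW_earliest M⟩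
  funext t
  simp only [LTW.sem, eLTW_semState]
  rfl

end LTWpaper
end

section
/- Let M and M' be two equivalent erase-ordered linear tree-to-word transducers such that (a) every quasi-periodic state q satisfies lcp(L_q) = lcs(L_q) = ε, and (b) for each occurrence q(x) u in a rule (a state followed by the word u) for which the language L_q u = { w u : w ∈ L_q } is quasi-periodic, lcp(L_q u) = ε. Let q, q' be two co-reachable states of M, M' respectively, with rules q, f → u₀ q₁(x_{σ₁(1)}) … q_n(x_{σ₁(n)}) u_n and q', f → v₀ q'₁(x_{σ₂(1)}) … q'_n(x_{σ₂(n)}) v_n. Then for all k < l such that σ₁(k) = σ₂(l), all the states q_i with k ≤ i ≤ l are periodic with one common period, and u_j = ε for all k ≤ j < l. -/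
namespace LTWpaper

theorem length_listPow {Δ : Type} (w : List Δ) (n : ℕ) :
    (listPow w n).length = n * w.length := by
  induction n with
  | zero => simp [listPow]
  | succ n ih => simp [listPow, ih]; ring

theorem listPow_conj {Δ : Type} {z' u z : List Δ} (h : z' ++ u = u ++ z) (n : ℕ) :
    listPow z' n ++ u = u ++ listPow z n := by
  induction n with
  | zero => simp [listPow]
  | succ n ih =>
    simp only [listPow]
    rw [List.append_assoc, ih, ← List.append_assoc, h, List.append_assoc]

theorem listPow_comm {Δ : Type} (w : List Δ) (n : ℕ) :
    listPow w n ++ w = w ++ listPow w n := listPow_conj rfl n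

theorem le_listPow {Δ : Type} {z : List Δ} (hz : z ≠ []) (n : ℕ) :
    n ≤ (listPow z n).length := by
  rw [length_listPow]
  have : 0 < z.length := List.length_pos_iff.2 hz
  nlinarith

theorem conj_prefix {Δ : Type} {z' u z : List Δ} (h : z' ++ u = u ++ z) (hz : z' ≠ []) :
    u <+: listPow z' u.length := by
  have h1 := listPow_conj h u.length
  exact List.prefix_of_prefix_length_le (l₃ := u ++ listPow z u.length) (List.prefix_append _ _)
    (h1 ▸ List.prefix_append _ _) (le_listPow hz _)

theorem conj_suffix {Δ : Type} {z' u z : List Δ} (h : z' ++ u = u ++ z) (hz : z ≠ [])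
    {n : ℕ} (hn : u.length ≤ n) :
    u <:+ listPow z n := by
  have h1 := listPow_conj h n
  exact List.suffix_of_suffix_length_le (l₃ := u ++ listPow z n)
    (h1 ▸ List.suffix_append _ _) (List.suffix_append _ _) (hn.trans (le_listPow hz _))

/-- `w` commutes with `s`. -/
def Cm {Δ : Type} (s w : List Δ) : Prop := w ++ s = s ++ w

theorem Cm.app {Δ : Type} {s w v : List Δ} (h : Cm s w) (h' : Cm s v) : Cm s (w ++ v) := by
  unfold Cm at *
  rw [List.append_assoc, h', ← List.append_assoc, h, List.append_assoc]

theorem Cm.nil {Δ : Type} (s : List Δ) : Cm s [] := by simp [Cm]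

theorem Cm.prefix {Δ : Type} {s w : List Δ} (h : Cm s w) (hs : s ≠ []) {n : ℕ}
    (hn : w.length ≤ n) : w <+: listPow s n := by
  have h1 := listPow_conj h.symm n
  exact List.prefix_of_prefix_length_le (l₃ := w ++ listPow s n) (List.prefix_append _ _)
    (h1 ▸ List.prefix_append _ _) (hn.trans (le_listPow hs _))

theorem Cm.pre {Δ : Type} {s w v : List Δ} (h : Cm s w) (h' : Cm s v) (hs : s ≠ [])
    (hl : w.length ≤ v.length) : w <+: v :=
  List.prefix_of_prefix_length_le (h.prefix hs hl) (h'.prefix hs le_rfl) hl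

theorem Cm.eq_of_length {Δ : Type} {s w v : List Δ} (h : Cm s w) (h' : Cm s v) (hs : s ≠ [])
    (hl : w.length = v.length) : w = v :=
  (h.pre h' hs hl.le).eq_of_length hl

theorem Cm.symm {Δ : Type} {s w : List Δ} (h : Cm s w) : Cm w s := Eq.symm h

theorem Cm.trans {Δ : Type} {s w v : List Δ} (h : Cm s w) (h' : Cm s v) (hs : s ≠ []) :
    Cm w v :=
  (h'.app h).eq_of_length (h.app h') hs (by simp [Nat.add_comm])

theorem Cm.tail {Δ : Type} {s w v : List Δ} (h : Cm s w) (h' : Cm s (w ++ v)) : Cm s v := by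
  unfold Cm at *
  rw [← List.append_assoc, ← h, List.append_assoc, List.append_assoc] at h'
  exact List.append_cancel_left h'

theorem exists_gen {Δ : Type} {s : List Δ} (hs : s ≠ []) :
    ∃ c, c ≠ [] ∧ Cm s c ∧ (∀ w, Cm s w → w ≠ [] → c.length ≤ w.length) ∧
      ∀ w, Cm s w → ∃ n, w = listPow c n := by
  classical
  have hex : ∃ n, ∃ c : List Δ, c ≠ [] ∧ Cm s c ∧ c.length = n := ⟨_, s, hs, rfl, rfl⟩
  obtain ⟨c, hc, hcs, hcl⟩ := Nat.find_spec hex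
  have hmin : ∀ w, Cm s w → w ≠ [] → c.length ≤ w.length := fun w hw hw0 => by
    rw [hcl]; exact Nat.find_min' hex ⟨w, hw0, hw, rfl⟩
  refine ⟨c, hc, hcs, hmin, ?_⟩
  intro w
  induction hN : w.length using Nat.strong_induction_on generalizing w with
  | _ N ih =>
    intro hw
    by_cases hw0 : w = []
    · exact ⟨0, by simp [listPow, hw0]⟩
    · obtain ⟨v, rfl⟩ := hcs.pre hw hs (hmin w hw hw0)
      have hcp : 0 < c.length := List.length_pos_iff.2 hc
      obtain ⟨n, hn⟩ := ih v.length (by simp at hN; omega) v rfl (hcs.tail hw)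
      exact ⟨n + 1, by simp [listPow, ← hn]⟩

theorem periodicOf_of_gen {Δ : Type} {s c : List Δ} (hs : s ≠ [])
    (hmin : ∀ w, Cm s w → w ≠ [] → c.length ≤ w.length)
    (hgen : ∀ w, Cm s w → ∃ n, w = listPow c n)
    {L : Set (List Δ)} (hL : ∀ w ∈ L, Cm s w) {v : List Δ} (hv : v ∈ L) (hv0 : v ≠ []) :
    PeriodicOf L c := by
  refine ⟨fun w hw => hgen w (hL w hw), fun w' hw' => ?_⟩
  obtain ⟨n, hn⟩ := hw' v hv
  have hw0 : w' ≠ [] := by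
    rintro rfl
    apply hv0
    rw [← List.length_eq_zero_iff, hn, length_listPow]; simp
  apply hmin _ _ hw0
  have h1 : Cm v w' := by unfold Cm; rw [hn, listPow_comm]
  exact (hL v hv).symm.trans h1 hv0

theorem qpl {Δ : Type} {L : Set (List Δ)} {u w : List Δ}
    (h : ∀ v ∈ L, ∃ n : ℕ, v = u ++ listPow w n) : QuasiPeriodic L := by
  classical
  have hex : ∃ n, ∃ c : List Δ, (∀ v ∈ L, ∃ n : ℕ, v = u ++ listPow c n) ∧ c.length = n :=
    ⟨_, w, h, rfl⟩
  obtain ⟨c, hc, hcl⟩ := Nat.find_spec hex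
  exact Or.inl ⟨u, c, hc, fun w' hw' => hcl ▸ Nat.find_min' hex ⟨w', hw', rfl⟩⟩

theorem qpr {Δ : Type} {L : Set (List Δ)} {u w : List Δ}
    (h : ∀ v ∈ L, ∃ n : ℕ, v = listPow w n ++ u) : QuasiPeriodic L := by
  classical
  have hex : ∃ n, ∃ c : List Δ, (∀ v ∈ L, ∃ n : ℕ, v = listPow c n ++ u) ∧ c.length = n :=
    ⟨_, w, h, rfl⟩
  obtain ⟨c, hc, hcl⟩ := Nat.find_spec hex
  exact Or.inr ⟨u, c, hc, fun w' hw' => hcl ▸ Nat.find_min' hex ⟨w', hw', rfl⟩⟩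

theorem exists_shortest {Δ : Type} {L : Set (List Δ)} (hne : L.Nonempty) :
    ∃ w ∈ L, ∀ v ∈ L, w.length ≤ v.length := by
  classical
  obtain ⟨w0, hw0⟩ := hne
  have hex : ∃ n, ∃ c ∈ L, c.length = n := ⟨_, w0, hw0, rfl⟩
  obtain ⟨c, hc, hcl⟩ := Nat.find_spec hex
  exact ⟨c, hc, fun w' hw' => hcl ▸ Nat.find_min' hex ⟨w', hw', rfl⟩⟩

/-- earliest + right-comparable by elements commuting with `s` gives all commuting with `s`. -/
theorem all_cm_right {Δ : Type} {s : List Δ} (hs : s ≠ []) {L : Set (List Δ)} (hne : L.Nonempty)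
    (hE : QuasiPeriodic L → EarliestLang L)
    (h : ∀ w ∈ L, ∀ v ∈ L, w.length ≤ v.length → ∃ t, Cm s t ∧ v = t ++ w) :
    ∀ w ∈ L, Cm s w := by
  obtain ⟨c, -, -, -, hgen⟩ := exists_gen hs
  obtain ⟨w0, hw0, hmin⟩ := exists_shortest hne
  have hq : QuasiPeriodic L := qpr (u := w0) (w := c) (fun v hv => by
    obtain ⟨t, ht, rfl⟩ := h w0 hw0 v hv (hmin v hv)
    obtain ⟨n, rfl⟩ := hgen t ht
    exact ⟨n, rfl⟩)
  have h0 : w0 = [] := (hE hq).2 w0 (fun v hv => by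
    obtain ⟨t, ht, rfl⟩ := h w0 hw0 v hv (hmin v hv)
    exact List.suffix_append _ _)
  intro w hw
  obtain ⟨t, ht, rfl⟩ := h w0 hw0 w hw (hmin w hw)
  simpa [h0] using ht

theorem all_cm_left {Δ : Type} {s : List Δ} (hs : s ≠ []) {L : Set (List Δ)} (hne : L.Nonempty)
    (hE : QuasiPeriodic L → EarliestLang L)
    (h : ∀ w ∈ L, ∀ v ∈ L, w.length ≤ v.length → ∃ t, Cm s t ∧ v = w ++ t) :
    [] ∈ L ∧ ∀ w ∈ L, Cm s w := by
  obtain ⟨c, -, -, -, hgen⟩ := exists_gen hs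
  obtain ⟨w0, hw0, hmin⟩ := exists_shortest hne
  have hq : QuasiPeriodic L := qpl (u := w0) (w := c) (fun v hv => by
    obtain ⟨t, ht, rfl⟩ := h w0 hw0 v hv (hmin v hv)
    obtain ⟨n, rfl⟩ := hgen t ht
    exact ⟨n, rfl⟩)
  have h0 : w0 = [] := (hE hq).1 w0 (fun v hv => by
    obtain ⟨t, ht, rfl⟩ := h w0 hw0 v hv (hmin v hv)
    exact List.prefix_append _ _)
  refine ⟨h0 ▸ hw0, ?_⟩
  intro w hw
  obtain ⟨t, ht, rfl⟩ := h w0 hw0 w hw (hmin w hw)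
  simpa [h0] using ht

/-- The word after a state vanishes. -/
theorem word_eps {Δ : Type} {s : List Δ} (hs : s ≠ []) {L : Set (List Δ)} {u r z : List Δ}
    (hL : ∀ w ∈ L, Cm s w) (hu : s ++ (u ++ r) = (u ++ r) ++ z)
    (hE : QuasiPeriodic (appendLang L u) → LcpEps (appendLang L u)) : u = [] := by
  obtain ⟨c, -, -, -, hgen⟩ := exists_gen hs
  have hq : QuasiPeriodic (appendLang L u) := qpr (u := u) (w := c) (by
    rintro v ⟨x, hx, rfl⟩
    obtain ⟨n, rfl⟩ := hgen x (hL x hx)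
    exact ⟨n, rfl⟩)
  have hp := (List.prefix_append u r).trans (conj_prefix hu hs)
  refine hE hq u ?_
  rintro v ⟨x, hx, rfl⟩
  obtain ⟨κ, hκ⟩ := hp
  have h1 := listPow_conj (hL x hx).symm (u ++ r).length
  rw [← hκ] at h1
  refine List.prefix_of_prefix_length_le (l₃ := x ++ (u ++ κ)) ?_ ?_ (by simp)
  · rw [← h1, List.append_assoc]; exact List.prefix_append _ _
  · rw [← List.append_assoc]; exact List.prefix_append _ _

theorem core_words {Δ : Type} {P B R P' B' R' s z s' z' : List Δ} (hs : s ≠ []) (hz : z ≠ [])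
    (h1 : P ++ (B ++ R) = P' ++ (B' ++ R'))
    (h2 : P ++ (B ++ (z ++ R)) = P' ++ (z' ++ (B' ++ R')))
    (h3 : P ++ (s ++ (B ++ R)) = P' ++ (B' ++ (s' ++ R')))
    (h4 : P ++ (s ++ (B ++ (z ++ R))) = P' ++ (z' ++ (B' ++ (s' ++ R')))) :
    ∃ ζ, B ++ z = ζ ++ B ∧ Cm s ζ := by
  have l1 := congrArg List.length h1
  have l2 := congrArg List.length h2
  have l3 := congrArg List.length h3
  simp only [List.length_append] at l1 l2 l3
  have hs' : s' ≠ [] := by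
    rintro rfl; apply hs; rw [← List.length_eq_zero_iff]; simp at l3; omega
  have hz' : z' ≠ [] := by
    rintro rfl; apply hz; rw [← List.length_eq_zero_iff]; simp at l2; omega
  rcases le_total P'.length P.length with hl | hl
  · obtain ⟨β, rfl⟩ : P' <+: P := List.prefix_of_prefix_length_le
      (List.prefix_append P' (B' ++ R')) (h1 ▸ List.prefix_append _ _) hl
    simp only [List.append_assoc, List.append_cancel_left_eq] at h1 h2 h3 h4
    have e1 : z' ++ (β ++ B) = (β ++ B) ++ z := by
      apply List.append_cancel_right (bs := R)
      simp [h1, h2]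
    have e2 : z' ++ (β ++ (s ++ B)) = β ++ (s ++ (B ++ z)) := by
      apply List.append_cancel_right (bs := R)
      simp [h3, h4]
    have hp := (List.prefix_append β B).trans (conj_prefix e1 hz')
    obtain ⟨κ, hκ⟩ := hp
    have h5 := listPow_comm z' (β ++ B).length
    rw [← hκ] at h5
    obtain ⟨ζ, hζ⟩ : β <+: z' ++ β := List.prefix_of_prefix_length_le (l₃ := z' ++ (β ++ κ))
      (by rw [← h5, List.append_assoc]; exact List.prefix_append _ _)
      (by rw [← List.append_assoc]; exact List.prefix_append _ _) (by simp)
    rw [← List.append_assoc, ← hζ] at e1 e2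
    simp only [List.append_assoc, List.append_cancel_left_eq] at e1 e2
    refine ⟨ζ, e1.symm, ?_⟩
    apply List.append_cancel_right (bs := B)
    simp [e2, e1]
  · obtain ⟨β, rfl⟩ : P <+: P' := List.prefix_of_prefix_length_le
      (List.prefix_append P (B ++ R)) (h1 ▸ List.prefix_append _ _) hl
    simp only [List.append_assoc, List.append_cancel_left_eq] at h1 h2 h3 h4
    have e1 : s ++ (β ++ B') = (β ++ B') ++ s' := by
      apply List.append_cancel_right (bs := R')
      simp [← h1, ← h3]
    have e2 : s ++ (β ++ (z' ++ B')) = β ++ (z' ++ (B' ++ s')) := by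
      apply List.append_cancel_right (bs := R')
      simp [← h2, ← h4]
    have hp := (List.prefix_append β B').trans (conj_prefix e1 hs)
    obtain ⟨κ, hκ⟩ := hp
    have h5 := listPow_comm s (β ++ B').length
    rw [← hκ] at h5
    obtain ⟨σ, hσ⟩ : β <+: s ++ β := List.prefix_of_prefix_length_le (l₃ := s ++ (β ++ κ))
      (by rw [← h5, List.append_assoc]; exact List.prefix_append _ _)
      (by rw [← List.append_assoc]; exact List.prefix_append _ _) (by simp)
    rw [← List.append_assoc, ← hσ] at e1 e2
    simp only [List.append_assoc, List.append_cancel_left_eq] at e1 e2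
    have hc : σ ++ z' = z' ++ σ := by
      apply List.append_cancel_right (bs := B')
      simp [e2, e1]
    have hσ0 : σ ≠ [] := by
      rintro rfl
      have := congrArg List.length hσ
      simp at this; exact hs this
    obtain ⟨κ', hκ'⟩ := conj_suffix hσ.symm hσ0 le_rfl
    have h6 := listPow_conj hc β.length
    rw [← hκ'] at h6
    obtain ⟨ζ, hζ⟩ : β <:+ β ++ z' := List.suffix_of_suffix_length_le (l₃ := κ' ++ β ++ z')
      (by rw [h6, ← List.append_assoc]; exact List.suffix_append _ _)
      (by rw [List.append_assoc]; exact List.suffix_append _ _) (by simp)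
    refine ⟨ζ, ?_, ?_⟩
    · apply List.append_cancel_right (bs := R)
      simp only [List.append_assoc, h2, h1]
      rw [← List.append_assoc β, ← hζ, List.append_assoc]
    · apply List.append_cancel_right (bs := β)
      rw [List.append_assoc, List.append_assoc, hζ, ← hσ, ← List.append_assoc, hζ,
        ← List.append_assoc, ← hσ, List.append_assoc, List.append_assoc, hc]

/-- Length of the longest common prefix. -/
def lcpLen {Δ : Type} [DecidableEq Δ] : List Δ → List Δ → ℕ
  | a :: as, b :: bs => if a = b then lcpLen as bs + 1 else 0
  | _, _ => 0

theorem lcpLen_app {Δ : Type} [DecidableEq Δ] (u a b : List Δ) :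
    lcpLen (u ++ a) (u ++ b) = u.length + lcpLen a b := by
  induction u with
  | nil => simp
  | cons x u ih => simp [lcpLen, ih]; omega

theorem lcpLen_inc {Δ : Type} [DecidableEq Δ] (a b r r' : List Δ) (h : ¬ a <+: b)
    (h' : ¬ b <+: a) :
    lcpLen (a ++ r) (b ++ r') = lcpLen a b ∧ lcpLen a b < a.length := by
  induction a generalizing b with
  | nil => simp at h
  | cons x a ih =>
    cases b with
    | nil => simp at h'
    | cons y b =>
      by_cases hxy : x = y
      · subst hxy
        simp only [List.cons_prefix_cons, true_and] at h h'
        simpa [lcpLen] using ih b h h'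
      · simp [lcpLen, hxy]

theorem cmp_words {Δ : Type} {A B C A' B' C' x1 x2 x1' x2' y1 y2 y1' y2' : List Δ}
    (hy : y1 ≠ y2)
    (h1 : A ++ (x1 ++ (B ++ (y1 ++ C))) = A' ++ (y1' ++ (B' ++ (x1' ++ C'))))
    (h2 : A ++ (x1 ++ (B ++ (y2 ++ C))) = A' ++ (y2' ++ (B' ++ (x1' ++ C'))))
    (h3 : A ++ (x2 ++ (B ++ (y1 ++ C))) = A' ++ (y1' ++ (B' ++ (x2' ++ C'))))
    (h4 : A ++ (x2 ++ (B ++ (y2 ++ C))) = A' ++ (y2' ++ (B' ++ (x2' ++ C')))) :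
    x1 <+: x2 ∨ x2 <+: x1 := by
  classical
  by_contra hcon
  push Not at hcon
  obtain ⟨hn, hn'⟩ := hcon
  have e1 : ∀ r, lcpLen (A ++ (x1 ++ r)) (A ++ (x2 ++ r)) = A.length + lcpLen x1 x2 := by
    intro r; rw [lcpLen_app, (lcpLen_inc _ _ _ _ hn hn').1]
  have e2 := (lcpLen_inc x1 x2 [] [] hn hn').2
  have f1 := e1 (B ++ (y1 ++ C))
  have f2 := e1 (B ++ (y2 ++ C))
  rw [h1, h3, lcpLen_app, lcpLen_app, lcpLen_app] at f1
  rw [h2, h4, lcpLen_app, lcpLen_app, lcpLen_app] at f2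
  have l1 := congrArg List.length h1
  have l2 := congrArg List.length h2
  simp only [List.length_append] at l1 l2
  have ly' : y1'.length = y2'.length := by omega
  have ly : y1.length = y2.length := by omega
  have hy' : y1' ≠ y2' := by
    rintro rfl
    rw [← h2] at h1
    simp at h1
    exact hy h1
  have g1 : ¬ y1' <+: y2' := fun h => hy' (h.eq_of_length ly')
  have g2 : ¬ y2' <+: y1' := fun h => hy' (h.eq_of_length ly'.symm).symm
  have f3 : lcpLen (A' ++ (y1' ++ (B' ++ (x1' ++ C')))) (A' ++ (y2' ++ (B' ++ (x1' ++ C')))) =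
      A'.length + lcpLen y1' y2' := by
    rw [lcpLen_app, (lcpLen_inc _ _ _ _ g1 g2).1]
  have f4 := (lcpLen_inc y1' y2' [] [] g1 g2).2
  rw [← h1, ← h2, lcpLen_app, lcpLen_app, lcpLen_app] at f3
  omega

/-- Combined two-variable lemma. -/
theorem two_var {Δ : Type} {A B C A' B' C' x1 x2 x1' x2' y1 y2 y1' y2' : List Δ}
    (hx : x1 ≠ x2) (hy : y1 ≠ y2) (hxl : x1.length ≤ x2.length) (hyl : y1.length ≤ y2.length)
    (h1 : A ++ (x1 ++ (B ++ (y1 ++ C))) = A' ++ (y1' ++ (B' ++ (x1' ++ C'))))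
    (h2 : A ++ (x1 ++ (B ++ (y2 ++ C))) = A' ++ (y2' ++ (B' ++ (x1' ++ C'))))
    (h3 : A ++ (x2 ++ (B ++ (y1 ++ C))) = A' ++ (y1' ++ (B' ++ (x2' ++ C'))))
    (h4 : A ++ (x2 ++ (B ++ (y2 ++ C))) = A' ++ (y2' ++ (B' ++ (x2' ++ C')))) :
    ∃ s z ζ, s ≠ [] ∧ z ≠ [] ∧ x2 = x1 ++ s ∧ y2 = z ++ y1 ∧ B ++ z = ζ ++ B ∧ Cm s ζ := by
  have l1 := congrArg List.length h1
  have l2 := congrArg List.length h2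
  have l3 := congrArg List.length h3
  simp only [List.length_append] at l1 l2 l3
  have hy' : y1' ≠ y2' := by
    rintro rfl
    rw [← h2] at h1
    simp at h1
    exact hy h1
  have hx' : x1' ≠ x2' := by
    rintro rfl
    rw [← h3] at h1
    simp at h1
    exact hx h1
  have c1 := cmp_words hy h1 h2 h3 h4
  have c2 := cmp_words hx' h1.symm h3.symm h2.symm h4.symm
  have r1 := congrArg List.reverse h1
  have r2 := congrArg List.reverse h2
  have r3 := congrArg List.reverse h3
  have r4 := congrArg List.reverse h4
  simp only [List.reverse_append, List.append_assoc] at r1 r2 r3 r4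
  have c3 := cmp_words (by simpa using hx) r1 r3 r2 r4
  have c4 := cmp_words (by simpa using hy') r1.symm r2.symm r3.symm r4.symm
  simp only [List.reverse_prefix] at c3 c4
  have d1 : x1 <+: x2 := by
    rcases c1 with h | h
    · exact h
    · rw [h.eq_of_length_le hxl]
  have d2 : y1' <+: y2' := by
    rcases c2 with h | h
    · exact h
    · rw [h.eq_of_length_le (by omega)]
  have d3 : y1 <:+ y2 := by
    rcases c3 with h | h
    · exact h
    · rw [h.eq_of_length_le hyl]
  have d4 : x1' <:+ x2' := by
    rcases c4 with h | h
    · exact h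
    · rw [h.eq_of_length_le (by omega)]
  obtain ⟨s, rfl⟩ := d1
  obtain ⟨z', rfl⟩ := d2
  obtain ⟨z, rfl⟩ := d3
  obtain ⟨s', rfl⟩ := d4
  have hs : s ≠ [] := by rintro rfl; simp at hx
  have hz : z ≠ [] := by rintro rfl; simp at hy
  obtain ⟨ζ, hζ, hc⟩ := core_words (P := A ++ x1) (B := B) (R := y1 ++ C) (P' := A' ++ y1')
    (B' := B') (R' := x1' ++ C') (s' := s') (z' := z') hs hz
    (by simpa using h1) (by simpa using h2) (by simpa using h3) (by simpa using h4)
  exact ⟨s, z, ζ, hs, hz, rfl, rfl, hζ, hc⟩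

/-- The word `w_a u_{a+1} ⋯ w_{b-1} u_b`. -/
def blk {Δ : Type} (n : ℕ) (u : Fin (n + 1) → List Δ) (ws : Fin n → List Δ) (a b : ℕ) : List Δ :=
  (List.range' a (b - a)).flatMap fun i => if h : i < n then ws ⟨i, h⟩ ++ u (Fin.succ ⟨i, h⟩) else []

theorem blk_self {Δ : Type} (n : ℕ) (u : Fin (n + 1) → List Δ) (ws : Fin n → List Δ) (a : ℕ) :
    blk n u ws a a = [] := by simp [blk]

theorem blk_cons {Δ : Type} (n : ℕ) (u : Fin (n + 1) → List Δ) (ws : Fin n → List Δ)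
    (a : Fin n) (b : ℕ) (h : (a : ℕ) < b) :
    blk n u ws a b = ws a ++ (u a.succ ++ blk n u ws (a + 1) b) := by
  obtain ⟨d, hd⟩ : ∃ d, b - a = d + 1 := ⟨b - a - 1, by omega⟩
  have hd' : b - (a + 1) = d := by omega
  unfold blk
  rw [hd, hd', List.range'_succ, List.flatMap_cons, dif_pos a.2, List.append_assoc]

theorem blk_append {Δ : Type} (n : ℕ) (u : Fin (n + 1) → List Δ) (ws : Fin n → List Δ)
    (a b c : ℕ) (h : a ≤ b) (h' : b ≤ c) :
    blk n u ws a c = blk n u ws a b ++ blk n u ws b c := by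
  unfold blk
  rw [← List.flatMap_append]
  congr 1
  have h1 : c - a = (b - a) + (c - b) := by omega
  have h2 : b = a + (b - a) := by omega
  rw [h1]
  conv_rhs => rw [show List.range' b (c - b) = List.range' (a + 1 * (b - a)) (c - b) by
    congr 1; omega]
  rw [List.range'_append]

theorem blk_congr {Δ : Type} (n : ℕ) (u : Fin (n + 1) → List Δ) (ws ws' : Fin n → List Δ)
    (a b : ℕ) (h : ∀ i : Fin n, a ≤ i → (i : ℕ) < b → ws i = ws' i) :
    blk n u ws a b = blk n u ws' a b := by
  unfold blk
  rw [List.flatMap_def, List.flatMap_def]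
  congr 1
  apply List.map_congr_left
  intro i hi
  rw [List.mem_range'_1] at hi
  split_ifs with hn
  · rw [h ⟨i, hn⟩ hi.1 (by simp; omega)]
  · rfl

theorem interleave_eq {Δ : Type} (n : ℕ) (u : Fin (n + 1) → List Δ) (ws : Fin n → List Δ) :
    interleave n u ws = u 0 ++ blk n u ws 0 n := by
  unfold interleave blk
  congr 1
  have h1 : ∀ l : List (Fin n), l.foldr (fun i acc => ws i ++ u i.succ ++ acc) [] =
      (l.map Fin.val).flatMap
        (fun i => if h : i < n then ws ⟨i, h⟩ ++ u (Fin.succ ⟨i, h⟩) else []) := by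
    intro l
    induction l with
    | nil => rfl
    | cons x l ih =>
      rw [List.foldr_cons, ih, List.map_cons, List.flatMap_cons, dif_pos x.2]
  rw [h1, List.map_coe_finRange_eq_range, Nat.sub_zero, List.range_eq_range']

theorem interleave_one {Δ : Type} (n : ℕ) (u : Fin (n + 1) → List Δ) (ws : Fin n → List Δ)
    (k : Fin n) :
    interleave n u ws = (u 0 ++ blk n u ws 0 k) ++
      (ws k ++ (u k.succ ++ blk n u ws (k + 1) n)) := by
  rw [interleave_eq, blk_append n u ws 0 k n (Nat.zero_le _) k.2.le, blk_cons n u ws k n k.2]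
  simp

theorem interleave_two {Δ : Type} (n : ℕ) (u : Fin (n + 1) → List Δ) (ws : Fin n → List Δ)
    (k m : Fin n) (h : k < m) :
    interleave n u ws = (u 0 ++ blk n u ws 0 k) ++
      (ws k ++ ((u k.succ ++ blk n u ws (k + 1) m) ++
        (ws m ++ (u m.succ ++ blk n u ws (m + 1) n)))) := by
  have h' : (k : ℕ) < m := h
  rw [interleave_one n u ws k, blk_append n u ws (k + 1) m n h' m.2.le, blk_cons n u ws m n m.2]
  simp

section abstr

variable {Δ T : Type} {n : ℕ}

theorem one_eq {σ σ' : Equiv.Perm (Fin n)} {D : Fin n → Set T}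
    {g g' : Fin n → T → List Δ} {u u' : Fin (n + 1) → List Δ} {a b a' b' : List Δ}
    (heq : ∀ ts : Fin n → T, (∀ v, ts v ∈ D v) →
      a ++ interleave n u (fun i => g i (ts (σ i))) ++ b =
      a' ++ interleave n u' (fun i => g' i (ts (σ' i))) ++ b')
    (ts : Fin n → T) (hts : ∀ v, ts v ∈ D v)
    {k l : Fin n} (hkl : σ k = σ' l) :
    ∃ A C A' C', ∀ t ∈ D (σ k), A ++ (g k t ++ C) = A' ++ (g' l t ++ C') := by
  classical
  refine ⟨a ++ (u 0 ++ blk n u (fun i => g i (ts (σ i))) 0 k),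
    (u k.succ ++ blk n u (fun i => g i (ts (σ i))) (k + 1) n) ++ b,
    a' ++ (u' 0 ++ blk n u' (fun i => g' i (ts (σ' i))) 0 l),
    (u' l.succ ++ blk n u' (fun i => g' i (ts (σ' i))) (l + 1) n) ++ b', ?_⟩
  intro t ht
  have h := heq (Function.update ts (σ k) t) (fun v => by
    by_cases hv : v = σ k
    · subst hv; simpa using ht
    · simpa [hv] using hts v)
  have e1 : ∀ i, i ≠ k → g i (Function.update ts (σ k) t (σ i)) = g i (ts (σ i)) := by
    intro i hi
    rw [Function.update_of_ne]; simpa using hi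
  have e2 : ∀ i, i ≠ l → g' i (Function.update ts (σ k) t (σ' i)) = g' i (ts (σ' i)) := by
    intro i hi
    rw [Function.update_of_ne]; rw [hkl]; simpa using hi
  rw [interleave_one _ _ _ k, interleave_one _ _ _ l] at h
  rw [blk_congr n u _ (fun i => g i (ts (σ i))) 0 k (fun i _ hi => e1 i (by rintro rfl; omega)),
    blk_congr n u _ (fun i => g i (ts (σ i))) (k + 1) n (fun i hi _ => e1 i (by rintro rfl; omega)),
    blk_congr n u' _ (fun i => g' i (ts (σ' i))) 0 l (fun i _ hi => e2 i (by rintro rfl; omega)),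
    blk_congr n u' _ (fun i => g' i (ts (σ' i))) (l + 1) n
      (fun i hi _ => e2 i (by rintro rfl; omega))] at h
  rw [Function.update_self, hkl, Function.update_self] at h
  simpa using h

theorem two_eq {σ σ' : Equiv.Perm (Fin n)} {D : Fin n → Set T}
    {g g' : Fin n → T → List Δ} {u u' : Fin (n + 1) → List Δ} {a b a' b' : List Δ}
    (heq : ∀ ts : Fin n → T, (∀ v, ts v ∈ D v) →
      a ++ interleave n u (fun i => g i (ts (σ i))) ++ b =
      a' ++ interleave n u' (fun i => g' i (ts (σ' i))) ++ b')
    (ts : Fin n → T) (hts : ∀ v, ts v ∈ D v)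
    {k l m m' : Fin n} (hkl : σ k = σ' l) (hm : σ m = σ' m') (hkm : k < m) (hml : m' < l) :
    ∃ A C A' B' C', ∀ t ∈ D (σ k), ∀ τ ∈ D (σ m),
      A ++ (g k t ++ ((u k.succ ++ blk n u (fun i => g i (ts (σ i))) (k + 1) m) ++ (g m τ ++ C))) =
      A' ++ (g' m' τ ++ (B' ++ (g' l t ++ C'))) := by
  classical
  refine ⟨a ++ (u 0 ++ blk n u (fun i => g i (ts (σ i))) 0 k),
    (u m.succ ++ blk n u (fun i => g i (ts (σ i))) (m + 1) n) ++ b,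
    a' ++ (u' 0 ++ blk n u' (fun i => g' i (ts (σ' i))) 0 m'),
    (u' m'.succ ++ blk n u' (fun i => g' i (ts (σ' i))) (m' + 1) l),
    (u' l.succ ++ blk n u' (fun i => g' i (ts (σ' i))) (l + 1) n) ++ b', ?_⟩
  intro t ht τ hτ
  have hne : σ k ≠ σ m := by simpa using hkm.ne
  have hkm' : (k : ℕ) < m := hkm
  have hml' : (m' : ℕ) < l := hml
  have h := heq (Function.update (Function.update ts (σ k) t) (σ m) τ) (fun v => by
    by_cases hv : v = σ m
    · subst hv; simpa using hτ
    · by_cases hv' : v = σ k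
      · subst hv'; simpa [hv] using ht
      · simpa [hv, hv'] using hts v)
  have e1 : ∀ i, i ≠ k → i ≠ m →
      g i (Function.update (Function.update ts (σ k) t) (σ m) τ (σ i)) = g i (ts (σ i)) := by
    intro i hi hi'
    rw [Function.update_of_ne, Function.update_of_ne]
    · simpa using hi
    · simpa using hi'
  have e2 : ∀ i, i ≠ l → i ≠ m' →
      g' i (Function.update (Function.update ts (σ k) t) (σ m) τ (σ' i)) = g' i (ts (σ' i)) := by
    intro i hi hi'
    rw [Function.update_of_ne, Function.update_of_ne]
    · rw [hkl]; simpa using hi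
    · rw [hm]; simpa using hi'
  rw [interleave_two _ _ _ k m hkm, interleave_two _ _ _ m' l hml] at h
  rw [blk_congr n u _ (fun i => g i (ts (σ i))) 0 k
      (fun i _ hi => e1 i (by rintro rfl; omega) (by rintro rfl; omega)),
    blk_congr n u _ (fun i => g i (ts (σ i))) (k + 1) m
      (fun i hi _ => e1 i (by rintro rfl; omega) (by rintro rfl; omega)),
    blk_congr n u _ (fun i => g i (ts (σ i))) (m + 1) n
      (fun i hi _ => e1 i (by rintro rfl; omega) (by rintro rfl; omega)),
    blk_congr n u' _ (fun i => g' i (ts (σ' i))) 0 m'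
      (fun i _ hi => e2 i (by rintro rfl; omega) (by rintro rfl; omega)),
    blk_congr n u' _ (fun i => g' i (ts (σ' i))) (m' + 1) l
      (fun i hi _ => e2 i (by rintro rfl; omega) (by rintro rfl; omega)),
    blk_congr n u' _ (fun i => g' i (ts (σ' i))) (l + 1) n
      (fun i hi _ => e2 i (by rintro rfl; omega) (by rintro rfl; omega))] at h
  rw [Function.update_self, Function.update_of_ne hne, Function.update_self, ← hm,
    Function.update_self, ← hkl, Function.update_of_ne hne, Function.update_self] at h
  simpa using h

theorem exists_cross {σ σ' : Equiv.Perm (Fin n)} {k l : Fin n} (hkl : k < l)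
    (h : σ k = σ' l) : ∃ m m', l ≤ m ∧ m' < l ∧ σ m = σ' m' := by
  by_contra hcon
  push Not at hcon
  let τ : Equiv.Perm (Fin n) := σ.trans σ'.symm
  have h1 : ∀ m, l ≤ m → l ≤ τ m := by
    intro m hm
    by_contra hlt
    exact hcon m (τ m) hm (not_le.1 hlt) (by simp [τ])
  have h2 : Set.MapsTo τ (Set.Ici l) (Set.Ici l) := fun m hm => h1 m hm
  have h3 : Set.SurjOn τ (Set.Ici l) (Set.Ici l) := by
    have h4 : τ '' Set.Ici l = Set.Ici l := Set.eq_of_subset_of_ncard_le h2.image_subset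
      (by rw [Set.ncard_image_of_injective _ τ.injective]) (Set.toFinite _)
    exact h4.ge
  obtain ⟨m, hm, hml⟩ := h3 (Set.self_mem_Ici : l ∈ Set.Ici l)
  have : τ k = l := by simp [τ, h]
  rw [← this] at hml
  have := τ.injective hml
  subst this
  exact absurd hkl (not_lt.2 hm)

/-- Main combinatorial argument for a crossing pair `k < m`. -/
theorem cross_main {σ σ' : Equiv.Perm (Fin n)} {D : Fin n → Set T}
    {g g' : Fin n → T → List Δ} {u u' : Fin (n + 1) → List Δ} {a b a' b' : List Δ}
    (hD : ∀ v, (D v).Nonempty)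
    (heq : ∀ ts : Fin n → T, (∀ v, ts v ∈ D v) →
      a ++ interleave n u (fun i => g i (ts (σ i))) ++ b =
      a' ++ interleave n u' (fun i => g' i (ts (σ' i))) ++ b')
    (ha : ∀ i, QuasiPeriodic (g i '' D (σ i)) → EarliestLang (g i '' D (σ i)))
    (hb : ∀ i, QuasiPeriodic (appendLang (g i '' D (σ i)) (u i.succ)) →
      LcpEps (appendLang (g i '' D (σ i)) (u i.succ)))
    {k l m m' : Fin n} (hkl : σ k = σ' l) (hm : σ m = σ' m') (hkm : k < m) (hml : m' < l)
    (hk : ∃ t ∈ D (σ k), ∃ t' ∈ D (σ k), g k t ≠ g k t')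
    (hmn : ∃ t ∈ D (σ m), ∃ t' ∈ D (σ m), g m t ≠ g m t') :
    ∃ s : List Δ, s ≠ [] ∧ (∀ i, k ≤ i → i ≤ m → ∀ w ∈ g i '' D (σ i), Cm s w) ∧
      ∀ i, k ≤ i → i < m → u i.succ = [] := by
  classical
  have hkm' : (k : ℕ) < m := hkm
  -- two-variable lemma at every base point
  have key : ∀ ts : Fin n → T, (∀ v, ts v ∈ D v) → ∀ t1 ∈ D (σ k), ∀ t2 ∈ D (σ k),
      ∀ τ1 ∈ D (σ m), ∀ τ2 ∈ D (σ m), g k t1 ≠ g k t2 → g m τ1 ≠ g m τ2 →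
      (g k t1).length ≤ (g k t2).length → (g m τ1).length ≤ (g m τ2).length →
      ∃ s z ζ, s ≠ [] ∧ z ≠ [] ∧ g k t2 = g k t1 ++ s ∧ g m τ2 = z ++ g m τ1 ∧
        (u k.succ ++ blk n u (fun i => g i (ts (σ i))) (k + 1) m) ++ z =
          ζ ++ (u k.succ ++ blk n u (fun i => g i (ts (σ i))) (k + 1) m) ∧ Cm s ζ := by
    intro ts hts t1 h1 t2 h2 τ1 h3 τ2 h4 hx hy hxl hyl
    obtain ⟨A, C, A', B', C', h⟩ := two_eq heq ts hts hkl hm hkm hml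
    exact two_var hx hy hxl hyl (h t1 h1 τ1 h3) (h t1 h1 τ2 h4) (h t2 h2 τ1 h3) (h t2 h2 τ2 h4)
  choose ts0 hts0 using hD
  obtain ⟨t1, ht1, t2, ht2, htn, htl⟩ : ∃ t ∈ D (σ k), ∃ t' ∈ D (σ k), g k t ≠ g k t' ∧
      (g k t).length ≤ (g k t').length := by
    obtain ⟨t, h, t', h', hn⟩ := hk
    rcases le_total (g k t).length (g k t').length with hl | hl
    · exact ⟨t, h, t', h', hn, hl⟩
    · exact ⟨t', h', t, h, hn.symm, hl⟩
  obtain ⟨τ1, hτ1, τ2, hτ2, hτn, hτl⟩ : ∃ t ∈ D (σ m), ∃ t' ∈ D (σ m), g m t ≠ g m t' ∧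
      (g m t).length ≤ (g m t').length := by
    obtain ⟨t, h, t', h', hn⟩ := hmn
    rcases le_total (g m t).length (g m t').length with hl | hl
    · exact ⟨t, h, t', h', hn, hl⟩
    · exact ⟨t', h', t, h, hn.symm, hl⟩
  obtain ⟨s0, z, ζ, hs0, hz, hs0e, hze, hBz, hc0⟩ :=
    key ts0 hts0 t1 ht1 t2 ht2 τ1 hτ1 τ2 hτ2 htn hτn htl hτl
  have hlen : ζ.length = z.length := by
    have := congrArg List.length hBz
    simp at this; omega
  have hζ : ζ ≠ [] := by
    rintro rfl
    exact hz (List.length_eq_zero_iff.1 (by simpa using hlen.symm))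
  -- position k
  obtain ⟨hknil, hkc⟩ : [] ∈ g k '' D (σ k) ∧ ∀ w ∈ g k '' D (σ k), Cm ζ w := by
    apply all_cm_left hζ (Set.Nonempty.image _ ⟨t1, ht1⟩) (ha k)
    rintro _ ⟨p1, hp1, rfl⟩ _ ⟨p2, hp2, rfl⟩ hl
    by_cases hp : g k p1 = g k p2
    · exact ⟨[], Cm.nil _, by simp [hp]⟩
    · obtain ⟨s, z', ζ', hs, hz', hse, hze', hB', hc'⟩ :=
        key ts0 hts0 p1 hp1 p2 hp2 τ1 hτ1 τ2 hτ2 hp hτn hl hτl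
      have : z' = z := List.append_cancel_right (hze'.symm.trans hze)
      subst this
      have : ζ' = ζ := List.append_cancel_right (hB'.symm.trans hBz)
      subst this
      exact ⟨s, hc'.symm, hse⟩
  -- a nonempty word at k
  obtain ⟨e, he, hee⟩ := hknil
  obtain ⟨x, hx, hx0⟩ : ∃ x ∈ D (σ k), g k x ≠ [] := by
    by_contra hcon
    push Not at hcon
    exact htn ((hcon t1 ht1).trans (hcon t2 ht2).symm)
  have hxc : Cm ζ (g k x) := hkc _ ⟨x, hx, rfl⟩
  -- any base point
  have key2 : ∀ ts : Fin n → T, (∀ v, ts v ∈ D v) → ∀ τ1 ∈ D (σ m), ∀ τ2 ∈ D (σ m),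
      g m τ1 ≠ g m τ2 → (g m τ1).length ≤ (g m τ2).length →
      ∃ z ζ', g m τ2 = z ++ g m τ1 ∧
        (u k.succ ++ blk n u (fun i => g i (ts (σ i))) (k + 1) m) ++ z =
          ζ' ++ (u k.succ ++ blk n u (fun i => g i (ts (σ i))) (k + 1) m) ∧ Cm ζ ζ' := by
    intro ts hts τ1 h3 τ2 h4 hy hyl
    obtain ⟨s, z', ζ', hs, hz', hse, hze', hB', hc'⟩ :=
      key ts hts e he x hx τ1 h3 τ2 h4 (by rw [hee]; exact hx0.symm) hy (by simp [hee]) hyl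
    rw [hee, List.nil_append] at hse
    subst hse
    exact ⟨z', ζ', hze', hB', hxc.symm.trans hc' hs⟩
  have K0 : ∀ ts : Fin n → T, (∀ v, ts v ∈ D v) →
      ζ ++ (u k.succ ++ blk n u (fun i => g i (ts (σ i))) (k + 1) m) =
      (u k.succ ++ blk n u (fun i => g i (ts (σ i))) (k + 1) m) ++ z := by
    intro ts hts
    obtain ⟨z', ζ', hze', hB', hc'⟩ := key2 ts hts τ1 hτ1 τ2 hτ2 hτn hτl
    have : z' = z := List.append_cancel_right (hze'.symm.trans hze)
    subst this
    have hl' : ζ'.length = z'.length := by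
      have := congrArg List.length hB'
      simp at this; omega
    have : ζ' = ζ := hc'.eq_of_length (rfl : Cm ζ ζ) hζ (by omega)
    subst this
    exact hB'.symm
  have huk : u k.succ = [] := word_eps hζ hkc (K0 ts0 hts0) (hb k)
  -- induction
  have ind : ∀ d : ℕ, k + 1 + d ≤ m →
      (∀ ts : Fin n → T, (∀ v, ts v ∈ D v) →
        ζ ++ blk n u (fun i => g i (ts (σ i))) (k + 1 + d) m =
        blk n u (fun i => g i (ts (σ i))) (k + 1 + d) m ++ z) ∧
      (∀ i : Fin n, k ≤ i → (i : ℕ) < k + 1 + d →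
        (∀ w ∈ g i '' D (σ i), Cm ζ w) ∧ u i.succ = []) := by
    intro d
    induction d with
    | zero =>
      intro _
      refine ⟨fun ts hts => ?_, fun i hi hi' => ?_⟩
      · simpa [huk] using K0 ts hts
      · have : i = k := le_antisymm (by rw [Fin.le_def]; omega) hi
        subst this
        exact ⟨hkc, huk⟩
    | succ d ih =>
      intro hd
      obtain ⟨ih1, ih2⟩ := ih (by omega)
      have hin : k + 1 + d < n := by have := m.2; omega
      obtain ⟨i, hi⟩ : ∃ i : Fin n, (i : ℕ) = k + 1 + d := ⟨⟨_, hin⟩, rfl⟩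
      have hB : ∀ ts : Fin n → T, (∀ v, ts v ∈ D v) →
        ζ ++ (g i (ts (σ i)) ++ (u i.succ ++ blk n u (fun i => g i (ts (σ i))) (i + 1) m)) =
        (g i (ts (σ i)) ++ (u i.succ ++ blk n u (fun i => g i (ts (σ i))) (i + 1) m)) ++ z := by
        intro ts hts
        have := ih1 ts hts
        rw [← hi, blk_cons n u _ i m (by omega)] at this
        exact this
      have hup : ∀ t ∈ D (σ i),
        ζ ++ (g i t ++ (u i.succ ++ blk n u (fun i => g i (ts0 (σ i))) (i + 1) m)) =
        (g i t ++ (u i.succ ++ blk n u (fun i => g i (ts0 (σ i))) (i + 1) m)) ++ z := by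
        intro t ht
        have := hB (Function.update ts0 (σ i) t) (fun v => by
          by_cases hv : v = σ i
          · subst hv; simpa using ht
          · simpa [hv] using hts0 v)
        rw [Function.update_self] at this
        rw [blk_congr n u _ (fun i => g i (ts0 (σ i))) (i + 1) m (fun j hj _ => by
          rw [Function.update_of_ne]
          intro hh
          have := σ.injective hh
          subst this; omega)] at this
        exact this
      have hic : ∀ w ∈ g i '' D (σ i), Cm ζ w := by
        apply all_cm_right hζ (Set.Nonempty.image _ ⟨_, hts0 _⟩) (ha i)
        rintro _ ⟨p1, hp1, rfl⟩ _ ⟨p2, hp2, rfl⟩ hl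
        have q1 := hup p1 hp1
        have q2 := hup p2 hp2
        generalize u i.succ ++ blk n u (fun i => g i (ts0 (σ i))) (i + 1) m = R at q1 q2
        have hsuf : g i p1 ++ R <:+ g i p2 ++ R :=
          List.suffix_of_suffix_length_le (conj_suffix q1 hz (le_max_left _ _))
            (conj_suffix q2 hz (le_max_right _ _)) (by simpa using hl)
        obtain ⟨h, hh⟩ := hsuf
        rw [← List.append_assoc] at hh
        have hh2 := List.append_cancel_right hh
        refine ⟨h, ?_, hh2.symm⟩
        rw [← hh2] at q2
        apply List.append_cancel_right (bs := g i p1 ++ R)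
        rw [List.append_assoc, q1]
        simpa using q2.symm
      have hcan : ∀ ts : Fin n → T, (∀ v, ts v ∈ D v) →
        ζ ++ (u i.succ ++ blk n u (fun i => g i (ts (σ i))) (i + 1) m) =
        (u i.succ ++ blk n u (fun i => g i (ts (σ i))) (i + 1) m) ++ z := by
        intro ts hts
        have h1 := hB ts hts
        have h2 : Cm ζ (g i (ts (σ i))) := hic _ ⟨_, hts _, rfl⟩
        rw [← List.append_assoc, ← h2, List.append_assoc, List.append_assoc] at h1
        exact List.append_cancel_left h1
      have hui : u i.succ = [] := word_eps hζ hic (hcan ts0 hts0) (hb i)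
      refine ⟨fun ts hts => ?_, fun j hj hj' => ?_⟩
      · have := hcan ts hts
        rw [hui, hi] at this
        simpa [Nat.add_assoc] using this
      · by_cases hji : (j : ℕ) < k + 1 + d
        · exact ih2 j hj hji
        · have : j = i := Fin.ext (by omega)
          subst this
          exact ⟨hic, hui⟩
  obtain ⟨-, hfin⟩ := ind (m - (k + 1)) (by omega)
  rw [show (k : ℕ) + 1 + (m - (k + 1)) = m by omega] at hfin
  -- B commutes with ζ
  have hBc : ∀ e : ℕ, k + 1 + e ≤ m → Cm ζ (blk n u (fun i => g i (ts0 (σ i))) (k + 1) (k + 1 + e)) := by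
    intro e
    induction e with
    | zero => intro _; simp [blk_self, Cm.nil]
    | succ e ih =>
      intro hle
      rw [blk_append n u _ (k + 1) (k + 1 + e) (k + 1 + (e + 1)) (by omega) (by omega)]
      refine (ih (by omega)).app ?_
      have hin : k + 1 + e < n := by have := m.2; omega
      have h1 := blk_cons n u (fun i => g i (ts0 (σ i))) ⟨k + 1 + e, hin⟩ (k + 1 + (e + 1))
        (by simp)
      simp only at h1
      rw [h1, show k + 1 + e + 1 = k + 1 + (e + 1) by omega, blk_self]
      obtain ⟨h2, h3⟩ := hfin ⟨k + 1 + e, hin⟩ (by rw [Fin.le_def]; dsimp only; omega) (by dsimp only; omega)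
      rw [h3]
      simpa using h2 _ ⟨_, hts0 _, rfl⟩
  have hBm := hBc (m - (k + 1)) (by omega)
  rw [show (k : ℕ) + 1 + (m - (k + 1)) = m by omega] at hBm
  have hmc : ∀ w ∈ g m '' D (σ m), Cm ζ w := by
    apply all_cm_right hζ (Set.Nonempty.image _ ⟨_, hts0 _⟩) (ha m)
    rintro _ ⟨p1, hp1, rfl⟩ _ ⟨p2, hp2, rfl⟩ hl
    by_cases hp : g m p1 = g m p2
    · exact ⟨[], Cm.nil _, by simp [hp]⟩
    · obtain ⟨z', ζ', hze', hB', hc'⟩ := key2 ts0 hts0 p1 hp1 p2 hp2 hp hl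
      rw [huk, List.nil_append] at hB'
      have h5 : Cm ζ' (blk n u (fun i => g i (ts0 (σ i))) (k + 1) m) := hc'.trans hBm hζ
      have : z' = ζ' := by
        rw [← h5] at hB'
        exact List.append_cancel_left hB'
      subst this
      exact ⟨z', hc', hze'⟩
  refine ⟨ζ, hζ, fun i hi him => ?_, fun i hi him => (hfin i hi him).2⟩
  rcases him.lt_or_eq with h | h
  · exact (hfin i hi h).1
  · subst h; exact hmc

theorem nc_iff {σ σ' : Equiv.Perm (Fin n)} {D : Fin n → Set T}
    {g g' : Fin n → T → List Δ} {u u' : Fin (n + 1) → List Δ} {a b a' b' : List Δ}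
    (hD : ∀ v, (D v).Nonempty)
    (heq : ∀ ts : Fin n → T, (∀ v, ts v ∈ D v) →
      a ++ interleave n u (fun i => g i (ts (σ i))) ++ b =
      a' ++ interleave n u' (fun i => g' i (ts (σ' i))) ++ b')
    {k l : Fin n} (hkl : σ k = σ' l) :
    (∃ t ∈ D (σ k), ∃ t' ∈ D (σ k), g k t ≠ g k t') ↔
    (∃ t ∈ D (σ' l), ∃ t' ∈ D (σ' l), g' l t ≠ g' l t') := by
  choose ts0 hts0 using hD
  obtain ⟨A, C, A', C', h⟩ := one_eq heq ts0 hts0 hkl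
  rw [← hkl]
  constructor
  · rintro ⟨t, ht, t', ht', hn⟩
    refine ⟨t, ht, t', ht', fun hh => hn ?_⟩
    have h1 := h t ht
    rw [hh, ← h t' ht'] at h1
    simpa using h1
  · rintro ⟨t, ht, t', ht', hn⟩
    refine ⟨t, ht, t', ht', fun hh => hn ?_⟩
    have h1 := h t ht
    rw [hh, h t' ht'] at h1
    simpa using h1.symm

theorem erasing_of_const {L : Set (List Δ)} (hne : L.Nonempty)
    (hE : QuasiPeriodic L → EarliestLang L) (hc : ∀ x ∈ L, ∀ y ∈ L, x = y) :
    L = {([] : List Δ)} := by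
  obtain ⟨x, hx⟩ := hne
  have hq : QuasiPeriodic L := qpl (u := x) (w := []) (fun v hv => ⟨0, by
    simp [listPow, hc v hv x hx]⟩)
  have : x = [] := (hE hq).1 x (fun v hv => by rw [hc x hx v hv])
  subst this
  ext v
  simp only [Set.mem_singleton_iff]
  exact ⟨fun hv => hc v hv _ hx, fun hv => hv ▸ hx⟩

theorem abstract_main {σ σ' : Equiv.Perm (Fin n)} {D : Fin n → Set T}
    {g g' : Fin n → T → List Δ} {u u' : Fin (n + 1) → List Δ} {a b a' b' : List Δ}
    (hD : ∀ v, (D v).Nonempty)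
    (heq : ∀ ts : Fin n → T, (∀ v, ts v ∈ D v) →
      a ++ interleave n u (fun i => g i (ts (σ i))) ++ b =
      a' ++ interleave n u' (fun i => g' i (ts (σ' i))) ++ b')
    (ha : ∀ i, QuasiPeriodic (g i '' D (σ i)) → EarliestLang (g i '' D (σ i)))
    (ha' : ∀ i, QuasiPeriodic (g' i '' D (σ' i)) → EarliestLang (g' i '' D (σ' i)))
    (hb : ∀ i, QuasiPeriodic (appendLang (g i '' D (σ i)) (u i.succ)) →
      LcpEps (appendLang (g i '' D (σ i)) (u i.succ)))
    (he : ∀ i j, g i '' D (σ i) = {[]} → i ≤ j → g j '' D (σ j) = {[]} ∧ u j.succ = [])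
    (he' : ∀ i j, g' i '' D (σ' i) = {[]} → i ≤ j → g' j '' D (σ' j) = {[]})
    {k l : Fin n} (hkl : k < l) (h : σ k = σ' l) :
    (∃ w : List Δ, ∀ i, k ≤ i → i ≤ l → PeriodicOf (g i '' D (σ i)) w) ∧
      (∀ j, k ≤ j → j < l → u j.succ = []) := by
  by_cases hk : ∃ t ∈ D (σ k), ∃ t' ∈ D (σ k), g k t ≠ g k t'
  · obtain ⟨m, m', hlm, hml, hm⟩ := exists_cross hkl h
    have hl' := (nc_iff hD heq h).1 hk
    have hm' : ∃ t ∈ D (σ' m'), ∃ t' ∈ D (σ' m'), g' m' t ≠ g' m' t' := by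
      by_contra hcon
      push Not at hcon
      have h1 := erasing_of_const ((hD (σ' m')).image (g' m')) (ha' m') (by
        rintro _ ⟨p, hp, rfl⟩ _ ⟨q, hq, rfl⟩; exact hcon p hp q hq)
      have h2 := he' m' l h1 hml.le
      obtain ⟨t, ht, t', ht', hn⟩ := hl'
      have e1 : g' l t ∈ g' l '' D (σ' l) := ⟨t, ht, rfl⟩
      have e2 : g' l t' ∈ g' l '' D (σ' l) := ⟨t', ht', rfl⟩
      rw [h2] at e1 e2
      exact hn (e1.trans e2.symm)
    have hmn := (nc_iff hD heq hm).2 hm'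
    have hkm : k < m := hkl.trans_le hlm
    obtain ⟨s, hs, hsc, hsu⟩ := cross_main hD heq ha hb h hm hkm hml hk hmn
    obtain ⟨c, hc, hcs, hmin, hgen⟩ := exists_gen hs
    refine ⟨⟨c, fun i hi hil => ?_⟩, fun j hj hjl => hsu j hj (hjl.trans_le hlm)⟩
    have hne : ∃ v ∈ g i '' D (σ i), v ≠ [] := by
      by_contra hcon
      push Not at hcon
      have h1 : g i '' D (σ i) = {[]} := erasing_of_const ((hD (σ i)).image (g i)) (ha i)
        (fun x hx y hy => (hcon x hx).trans (hcon y hy).symm)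
      have h2 := (he i m h1 (hil.trans hlm)).1
      obtain ⟨t, ht, t', ht', hn⟩ := hmn
      have e1 : g m t ∈ g m '' D (σ m) := ⟨t, ht, rfl⟩
      have e2 : g m t' ∈ g m '' D (σ m) := ⟨t', ht', rfl⟩
      rw [h2] at e1 e2
      exact hn (e1.trans e2.symm)
    obtain ⟨v, hv, hv0⟩ := hne
    exact periodicOf_of_gen hs hmin hgen (hsc i hi (hil.trans hlm)) hv hv0
  · push Not at hk
    have h1 : g k '' D (σ k) = {[]} := erasing_of_const ((hD (σ k)).image (g k)) (ha k) (by
      rintro _ ⟨p, hp, rfl⟩ _ ⟨q, hq, rfl⟩; exact hk p hp q hq)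
    refine ⟨⟨[], fun i hi _ => ?_⟩, fun j hj _ => (he k j h1 hj).2⟩
    rw [(he k i h1 hi).1]
    exact ⟨fun v hv => ⟨0, by simpa [listPow] using hv⟩, fun _ _ => Nat.zero_le _⟩

end abstr

section trans

variable {F Δ Q Q' : Type} {ar : F → ℕ}

theorem sem_some (M : LTW F ar Δ Q) {q : Q} {f : F} {r : LTWRule Δ Q (ar f)}
    (hr : M.rules q f = some r) (ts : Fin (ar f) → RTree F ar)
    (h : ∀ i, (M.semState (ts (r.perm i)) (r.st i)).isSome) :
    M.semState (.node f ts) q = some (interleave (ar f) r.word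
      fun i => (M.semState (ts (r.perm i)) (r.st i)).getD []) := by
  rw [LTW.semState]
  simp only [hr]
  rw [dif_pos h]
  congr 2
  funext i
  rw [Option.get_eq_getD]

theorem sem_isSome (M : LTW F ar Δ Q) {q : Q} {f : F} {r : LTWRule Δ Q (ar f)}
    (hr : M.rules q f = some r) (ts : Fin (ar f) → RTree F ar) :
    (M.semState (.node f ts) q).isSome ↔
      ∀ i, (M.semState (ts (r.perm i)) (r.st i)).isSome := by
  constructor
  · intro h
    rw [LTW.semState] at h
    simp only [hr] at h
    by_contra hcon
    rw [dif_neg hcon] at h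
    simp at h
  · intro h
    rw [sem_some M hr ts h]; rfl

/-- `q` and `q'` compute the same function up to fixed contexts. -/
def Inv (M : LTW F ar Δ Q) (M' : LTW F ar Δ Q') (q : Q) (q' : Q') : Prop :=
  ∃ a b a' b' : List Δ, ∀ t, (M.semState t q).map (fun w => a ++ w ++ b) =
    (M'.semState t q').map (fun w => a' ++ w ++ b')

theorem Inv.isSome {M : LTW F ar Δ Q} {M' : LTW F ar Δ Q'} {q : Q} {q' : Q'}
    (h : Inv M M' q q') (t : RTree F ar) :
    (M.semState t q).isSome ↔ (M'.semState t q').isSome := by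
  obtain ⟨a, b, a', b', h⟩ := h
  have := congrArg Option.isSome (h t)
  rw [Option.isSome_map, Option.isSome_map] at this
  rw [this]

/-- Domain of variable `v` in a rule. -/
def domV (M : LTW F ar Δ Q) {f : F} (r : LTWRule Δ Q (ar f)) (v : Fin (ar f)) :
    Set (RTree F ar) := {t | (M.semState t (r.st (r.perm.symm v))).isSome}

theorem mem_domV (M : LTW F ar Δ Q) {f : F} (r : LTWRule Δ Q (ar f)) (i : Fin (ar f))
    (t : RTree F ar) : t ∈ domV M r (r.perm i) ↔ (M.semState t (r.st i)).isSome := by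
  simp [domV]

theorem domV_nonempty (M : LTW F ar Δ Q) (hdom : M.NonemptyDoms) {f : F}
    (r : LTWRule Δ Q (ar f)) (v : Fin (ar f)) : (domV M r v).Nonempty := by
  obtain ⟨t, w, h⟩ := hdom (r.st (r.perm.symm v))
  exact ⟨t, by simp [domV, h]⟩

theorem Inv.rule {M : LTW F ar Δ Q} {M' : LTW F ar Δ Q'} (hdom : M.NonemptyDoms)
    {q : Q} {q' : Q'} (h : Inv M M' q q')
    {f : F} {r : LTWRule Δ Q (ar f)} {r' : LTWRule Δ Q' (ar f)}
    (hr : M.rules q f = some r) (hr' : M'.rules q' f = some r') :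
    domV M r = domV M' r' ∧
    ∃ a b a' b' : List Δ, ∀ ts : Fin (ar f) → RTree F ar, (∀ v, ts v ∈ domV M r v) →
      a ++ interleave (ar f) r.word (fun i => (M.semState (ts (r.perm i)) (r.st i)).getD []) ++ b =
      a' ++ interleave (ar f) r'.word
        (fun i => (M'.semState (ts (r'.perm i)) (r'.st i)).getD []) ++ b' := by
  classical
  have hv : ∀ ts : Fin (ar f) → RTree F ar,
      (∀ v, ts v ∈ domV M r v) ↔ (∀ v, ts v ∈ domV M' r' v) := by
    intro ts
    have h1 := h.isSome (.node f ts)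
    rw [sem_isSome M hr, sem_isSome M' hr'] at h1
    simp only [← mem_domV] at h1
    exact (r.perm.surjective.forall (p := fun v => ts v ∈ domV M r v)).trans
      (h1.trans (r'.perm.surjective.forall (p := fun v => ts v ∈ domV M' r' v)).symm)
  refine ⟨?_, ?_⟩
  · choose ts0 hts0 using domV_nonempty M hdom r
    have hts0' := (hv ts0).1 hts0
    ext v t
    have h2 := hv (Function.update ts0 v t)
    have e1 : ∀ D : Fin (ar f) → Set (RTree F ar), (∀ v, ts0 v ∈ D v) →
        ((∀ w, Function.update ts0 v t w ∈ D w) ↔ t ∈ D v) := by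
      intro D hD
      constructor
      · intro hh; simpa using hh v
      · intro hh w
        by_cases hw : w = v
        · subst hw; simpa using hh
        · simpa [hw] using hD w
    rwa [e1 _ hts0, e1 _ hts0'] at h2
  · obtain ⟨a, b, a', b', hI⟩ := h
    refine ⟨a, b, a', b', fun ts hts => ?_⟩
    have hts' := (hv ts).1 hts
    have h3 := hI (.node f ts)
    rw [sem_some M hr ts (fun i => (mem_domV M r i _).1 (hts _)),
      sem_some M' hr' ts (fun i => (mem_domV M' r' i _).1 (hts' _))] at h3
    simpa only [Option.map_some, Option.some.injEq] using h3

theorem CoReach.inv {M : LTW F ar Δ Q} {M' : LTW F ar Δ Q'} (hdom : M.NonemptyDoms)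
    (heq : M.sem = M'.sem) {q : Q} {q' : Q'} (h : CoReach M M' q q') : Inv M M' q q' := by
  induction h with
  | base => exact ⟨_, _, _, _, fun t => congrFun heq t⟩
  | @step q₁ q₂ f r₁ r₂ i j _ h1 h2 hij ih =>
    obtain ⟨hD, a, b, a', b', he⟩ := ih.rule hdom h1 h2
    choose ts0 hts0 using domV_nonempty M hdom r₁
    obtain ⟨A, C, A', C', hA⟩ := one_eq (g := fun i t => (M.semState t (r₁.st i)).getD [])
      (g' := fun i t => (M'.semState t (r₂.st i)).getD []) he ts0 hts0 hij
    refine ⟨A, C, A', C', fun t => ?_⟩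
    have h3 := mem_domV M r₁ i t
    have h4 := mem_domV M' r₂ j t
    rw [← hD, ← hij] at h4
    by_cases ht : t ∈ domV M r₁ (r₁.perm i)
    · have h5 := hA t ht
      obtain ⟨w, hw⟩ := Option.isSome_iff_exists.1 (h3.1 ht)
      obtain ⟨w', hw'⟩ := Option.isSome_iff_exists.1 (h4.1 ht)
      simp only [hw, hw', Option.getD_some] at h5
      simp [hw, hw', h5]
    · have h6 := Option.not_isSome_iff_eq_none.1 (mt h3.2 ht)
      have h7 := Option.not_isSome_iff_eq_none.1 (mt h4.2 ht)
      rw [h6, h7]; rfl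

theorem lang_eq (M : LTW F ar Δ Q) {f : F} (r : LTWRule Δ Q (ar f)) (i : Fin (ar f)) :
    (fun t => (M.semState t (r.st i)).getD []) '' domV M r (r.perm i) = M.lang (r.st i) := by
  ext w
  simp only [Set.mem_image, mem_domV, LTW.lang, Set.mem_setOf_eq]
  constructor
  · rintro ⟨t, ht, rfl⟩
    obtain ⟨w, hw⟩ := Option.isSome_iff_exists.1 ht
    exact ⟨t, by simp [hw]⟩
  · rintro ⟨t, ht⟩
    exact ⟨t, by simp [ht], by simp [ht]⟩

end trans

/-- the first part of Statement 3 already holds when only quasi-periodic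
states and quasi-periodic rule parts `q(x) u` are required to be earliest. -/
theorem coreachable_rules_of_equivalent_partial_earliest_eraseOrdered
    {F Δ Q Q' : Type} {ar : F → ℕ} [Finite Q] [Finite Q']
    (M : LTW F ar Δ Q) (M' : LTW F ar Δ Q')
    (hdom : M.NonemptyDoms) (hdom' : M'.NonemptyDoms)
    (heq : M.sem = M'.sem)
    (heo : M.EraseOrdered) (heo' : M'.EraseOrdered)
    (ha : ∀ q : Q, QuasiPeriodic (M.lang q) → EarliestLang (M.lang q))
    (ha' : ∀ q' : Q', QuasiPeriodic (M'.lang q') → EarliestLang (M'.lang q'))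
    (hb : ∀ (q : Q) (f : F) (r : LTWRule Δ Q (ar f)), M.rules q f = some r →
      ∀ i : Fin (ar f), QuasiPeriodic (appendLang (M.lang (r.st i)) (r.word i.succ)) →
        LcpEps (appendLang (M.lang (r.st i)) (r.word i.succ)))
    (hb' : ∀ (q' : Q') (f : F) (r' : LTWRule Δ Q' (ar f)), M'.rules q' f = some r' →
      ∀ i : Fin (ar f), QuasiPeriodic (appendLang (M'.lang (r'.st i)) (r'.word i.succ)) →
        LcpEps (appendLang (M'.lang (r'.st i)) (r'.word i.succ)))
    {q : Q} {q' : Q'} (hco : CoReach M M' q q')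
    {f : F} {r : LTWRule Δ Q (ar f)} {r' : LTWRule Δ Q' (ar f)}
    (hr : M.rules q f = some r) (hr' : M'.rules q' f = some r') :
    ∀ k l : Fin (ar f), k < l → r.perm k = r'.perm l →
      (∃ w : List Δ, ∀ i : Fin (ar f), k ≤ i → i ≤ l → PeriodicOf (M.lang (r.st i)) w) ∧
      (∀ j : Fin (ar f), k ≤ j → j < l → r.word j.succ = []) := by
  
  intro k l hkl hp
  obtain ⟨hD, a, b, a', b', he⟩ := (hco.inv hdom heq).rule hdom hr hr'
  have L : ∀ i, (fun t => (M.semState t (r.st i)).getD []) '' domV M r (r.perm i) =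
      M.lang (r.st i) := lang_eq M r
  have L' : ∀ i, (fun t => (M'.semState t (r'.st i)).getD []) '' domV M r (r'.perm i) =
      M'.lang (r'.st i) := by rw [hD]; exact lang_eq M' r'
  have key := abstract_main (g := fun i t => (M.semState t (r.st i)).getD [])
    (g' := fun i t => (M'.semState t (r'.st i)).getD []) (domV_nonempty M hdom r) he
    (fun i => by rw [L]; exact ha _) (fun i => by rw [L']; exact ha' _)
    (fun i => by rw [L]; exact hb q f r hr i)
    (fun i j => by
      rw [L, L]; intro h1 h2
      obtain ⟨h3, -, h4⟩ := heo q f r hr i j h1 h2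
      exact ⟨h3, h4⟩)
    (fun i j => by rw [L', L']; intro h1 h2; exact (heo' q' f r' hr' i j h1 h2).1)
    hkl hp
  simp only [L] at key
  exact key

end LTWpaper
end
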